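/- arXiv:1904.02310 — 4 statements merged into one kernel-verified Lean document; each statement's English description precedes it below -/
import Mathlib

section
/- Let m ≡ 0 (mod 4) and let e be an integer with 1 ≤ e ≤ m/2 and gcd(m,e) = 2. Then the number of codewords of Hamming weight 8 in the extended code C̄_E equals Ā_8 = 2^{m−3}(2^m − 1)(2^{4m−4} − 27·2^{3m−4} + 23·2^{2m−1} + 261·2^{m−2} + 403)/315. -/
open Polynomial Finset

/-- The polynomial `c₀ + c₁x + ⋯ + c_{n−1}x^{n−1}` associated to a vector. -/
noncomputable def codePoly {n : ℕ} (c : Fin n → ZMod 2) : Polynomial (ZMod 2) :=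
  ∑ i : Fin n, Polynomial.C (c i) * Polynomial.X ^ (i : ℕ)

/-- The generator polynomial `g_E(x) = M_α(x) · M_{α^{1+2^e}}(x)`. -/
noncomputable def gE (m e : ℕ) (α : GaloisField 2 m) : Polynomial (ZMod 2) :=
  minpoly (ZMod 2) α * minpoly (ZMod 2) (α ^ (1 + 2 ^ e))

/-- The binary cyclic code `C_E` of length `2^m − 1` with generator polynomial `g_E`. -/
def CE (m e : ℕ) (α : GaloisField 2 m) : Set (Fin (2 ^ m - 1) → ZMod 2) :=
  {c | gE m e α ∣ codePoly c}

/-- The extended code `C̄_E ⊆ F_2^{2^m}`: the first `2^m − 1` coordinates form a codeword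
of `C_E` and all `2^m` coordinates sum to zero. -/
def CEbar (m e : ℕ) (α : GaloisField 2 m) : Set (Fin (2 ^ m) → ZMod 2) :=
  {c | (fun i : Fin (2 ^ m - 1) => c (Fin.castLE (Nat.sub_le _ _) i)) ∈ CE m e α ∧
       ∑ i, c i = 0}

section Weight8Aux

theorem w8_exists_char (F : Type*) [Field F] [Fintype F] [Algebra (ZMod 2) F] [CharP F 2] :
    ∃ ψ : AddChar F ℤ, ψ.IsPrimitive ∧ ∀ x, ψ (x ^ 2) = ψ x := by
  classical
  have h01 : ∀ a b : ZMod 2, (if a + b = 0 then (1 : ℤ) else -1) =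
      (if a = 0 then 1 else -1) * (if b = 0 then 1 else -1) := by decide
  let ψ : AddChar F ℤ :=
    { toFun := fun x => if Algebra.trace (ZMod 2) F x = 0 then 1 else -1
      map_zero_eq_one' := by simp
      map_add_eq_mul' := by
        intro a b
        rw [map_add]
        exact h01 _ _ }
  refine ⟨ψ, AddChar.IsPrimitive.of_ne_one ?_, ?_⟩
  · intro h
    apply Algebra.trace_ne_zero (ZMod 2) F
    ext b
    have h1 : ψ b = 1 := by rw [h]; simp
    by_contra hb
    have h2 : ψ b = -1 := if_neg hb
    rw [h1] at h2
    norm_num at h2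
  · intro x
    have h := Algebra.trace_eq_of_algEquiv (FiniteField.frobeniusAlgEquivOfAlgebraic (ZMod 2) F) x
    have h3 : (FiniteField.frobeniusAlgEquivOfAlgebraic (ZMod 2) F) x = x ^ 2 := by
      simp [FiniteField.frobeniusAlgEquivOfAlgebraic]
    rw [h3] at h
    change (if _ then _ else _) = (if _ then _ else _)
    rw [h]

/-- Number of length-`r` words over an alphabet of size `q` whose set of letters of odd
multiplicity is a given `w`-set. -/
def w8p (q : ℤ) : ℕ → ℕ → ℤ
  | 0, w => if w = 0 then 1 else 0
  | r + 1, w => w * w8p q r (w - 1) + (q - w) * w8p q r (w + 1)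

theorem w8_pow_expand {F : Type*} [Fintype F] [DecidableEq F] (f : F → ℤ)
    (hf : ∀ x, f x * f x = 1) (r : ℕ) :
    (∑ x, f x) ^ r = ∑ D : Finset F, w8p (Fintype.card F) r D.card * ∏ x ∈ D, f x := by
  induction r with
  | zero =>
    simp [w8p, Finset.card_eq_zero]
  | succ r ih =>
    have hflip : ∀ (D : Finset F) (x : F),
        ∏ y ∈ symmDiff D {x}, f y = (∏ y ∈ D, f y) * f x := by
      intro D x
      by_cases hx : x ∈ D
      · have : symmDiff D {x} = D.erase x := by
          ext y; simp only [Finset.mem_symmDiff, Finset.mem_singleton, Finset.mem_erase]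
          constructor
          · rintro (h | h)
            · exact ⟨h.2, h.1⟩
            · exact absurd (h.1 ▸ hx) h.2
          · intro h; exact Or.inl ⟨h.2, h.1⟩
        rw [this, ← Finset.prod_erase_mul D f hx, mul_assoc, hf, mul_one]
      · have : symmDiff D {x} = insert x D := by
          ext y; simp only [Finset.mem_symmDiff, Finset.mem_singleton, Finset.mem_insert]
          constructor
          · rintro (h | h)
            · exact Or.inr h.1
            · exact Or.inl h.1
          · rintro (h | h)
            · exact Or.inr ⟨h, h ▸ hx⟩
            · exact Or.inl ⟨h, fun e => hx (e ▸ h)⟩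
        rw [this, Finset.prod_insert hx, mul_comm]
    have hcard : ∀ D : Finset F, ∑ x, w8p (Fintype.card F) r (symmDiff D {x}).card =
        w8p (Fintype.card F) (r + 1) D.card := by
      intro D
      rw [w8p, ← Finset.sum_add_sum_compl D]
      congr 1
      · rw [Finset.sum_congr rfl (g := fun _ => w8p (Fintype.card F) r (D.card - 1))]
        · simp
        · intro x hx
          have : symmDiff D {x} = D.erase x := by
            ext y; simp only [Finset.mem_symmDiff, Finset.mem_singleton, Finset.mem_erase]
            constructor
            · rintro (h | h)
              · exact ⟨h.2, h.1⟩
              · exact absurd (h.1 ▸ hx) h.2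
            · intro h; exact Or.inl ⟨h.2, h.1⟩
          rw [this, Finset.card_erase_of_mem hx]
      · rw [Finset.sum_congr rfl (g := fun _ => w8p (Fintype.card F) r (D.card + 1))]
        · simp [Finset.card_compl, Nat.cast_sub (Finset.card_le_univ D)]
        · intro x hx
          rw [Finset.mem_compl] at hx
          have : symmDiff D {x} = insert x D := by
            ext y; simp only [Finset.mem_symmDiff, Finset.mem_singleton, Finset.mem_insert]
            constructor
            · rintro (h | h)
              · exact Or.inr h.1
              · exact Or.inl h.1
            · rintro (h | h)
              · exact Or.inr ⟨h, h ▸ hx⟩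
              · exact Or.inl ⟨h, fun e => hx (e ▸ h)⟩
          rw [this, Finset.card_insert_of_notMem hx]
    have hre : ∀ x : F, ∑ D : Finset F, w8p (Fintype.card F) r D.card * ((∏ y ∈ D, f y) * f x) =
        ∑ D : Finset F, w8p (Fintype.card F) r (symmDiff D {x}).card * ∏ y ∈ D, f y := by
      intro x
      refine Finset.sum_nbij' (fun D => symmDiff D {x}) (fun D => symmDiff D {x}) ?_ ?_ ?_ ?_ ?_
      · simp
      · simp
      · intro D _; simp
      · intro D _; simp
      · intro D _; rw [hflip]; simp
    calc (∑ x, f x) ^ (r + 1)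
        = ∑ x, ∑ D : Finset F, w8p (Fintype.card F) r D.card * ((∏ y ∈ D, f y) * f x) := by
          rw [pow_succ, ih, Finset.sum_mul_sum, Finset.sum_comm]
          simp only [mul_assoc]
      _ = ∑ x, ∑ D : Finset F, w8p (Fintype.card F) r (symmDiff D {x}).card * ∏ y ∈ D, f y :=
          Finset.sum_congr rfl fun x _ => hre x
      _ = _ := by
          rw [Finset.sum_comm]
          refine Finset.sum_congr rfl fun D _ => ?_
          rw [← Finset.sum_mul, hcard]

theorem w8p_zero_of_lt (q : ℤ) (r : ℕ) : ∀ w, r < w → w8p q r w = 0 := by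
  induction r with
  | zero => intro w hw; simp [w8p]; omega
  | succ r ih => intro w hw; rw [w8p, ih _ (by omega), ih _ (by omega)]; ring

theorem w8_bij {F : Type*} [Field F] [Fintype F] [CharP F 2] (e : ℕ) :
    Function.Bijective (fun x : F => x ^ 2 ^ e) := by
  rw [← Finite.injective_iff_bijective]
  intro x y h
  have h2 : (x - y) ^ 2 ^ e = 0 := by
    rw [sub_pow_char_pow]
    simpa [sub_eq_zero] using h
  exact sub_eq_zero.mp (pow_eq_zero_iff (by positivity) |>.mp h2)

section Moments
set_option linter.unusedSectionVars false
variable {F : Type*} [Field F] [Fintype F] [DecidableEq F] [CharP F 2]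

/-- radical -/
def w8R (F : Type*) [Field F] [Fintype F] [DecidableEq F] (e : ℕ) (a : F) : Finset F :=
  univ.filter fun y => a * y + a ^ 2 ^ e * (y ^ 2 ^ e) ^ 2 ^ e = 0

/-- exponential sum -/
def w8S {F : Type*} [Field F] [Fintype F] (ψ : AddChar F ℤ) (e : ℕ) (a b : F) : ℤ :=
  ∑ x, ψ (a * x ^ (1 + 2 ^ e) + b * x)

theorem w8_frob (ψ : AddChar F ℤ) (h2 : ∀ x, ψ (x ^ 2) = ψ x) (e : ℕ) (x : F) :
    ψ (x ^ 2 ^ e) = ψ x := by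
  induction e with
  | zero => simp
  | succ e ih => rw [pow_succ, pow_mul, h2, ih]

theorem w8_sq (ψ : AddChar F ℤ) (x : F) : ψ x * ψ x = 1 := by
  rw [← AddChar.map_add_eq_mul, CharTwo.add_self_eq_zero, AddChar.map_zero_eq_one]

theorem w8_bil (ψ : AddChar F ℤ) (h2 : ∀ x, ψ (x ^ 2) = ψ x) (e : ℕ) (a b x y : F) :
    ψ (a * (x + y) ^ (1 + 2 ^ e) + b * (x + y)) =
      ψ (a * x ^ (1 + 2 ^ e) + b * x) * (ψ (a * y ^ (1 + 2 ^ e) + b * y) *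
        ψ (x ^ 2 ^ e * (a * y + a ^ 2 ^ e * (y ^ 2 ^ e) ^ 2 ^ e))) := by
  have h3 : ψ (x ^ 2 ^ e * (a ^ 2 ^ e * (y ^ 2 ^ e) ^ 2 ^ e)) = ψ (a * x * y ^ 2 ^ e) := by
    rw [← w8_frob ψ h2 e (a * x * y ^ 2 ^ e)]
    congr 1
    rw [mul_pow, mul_pow]; ring
  rw [mul_add (x ^ 2 ^ e), AddChar.map_add_eq_mul ψ (x ^ 2 ^ e * _), h3]
  simp only [← AddChar.map_add_eq_mul]
  congr 1
  rw [pow_add, add_pow_char_pow]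
  ring

theorem w8_S_sq (ψ : AddChar F ℤ) (hψ : ψ.IsPrimitive) (h2 : ∀ x, ψ (x ^ 2) = ψ x)
    (e : ℕ) (a b : F) :
    w8S ψ e a b ^ 2 = Fintype.card F * ∑ y ∈ w8R F e a, ψ (a * y ^ (1 + 2 ^ e) + b * y) := by
  have h1 : w8S ψ e a b ^ 2 = ∑ x : F, ∑ y : F, ψ (a * x ^ (1 + 2 ^ e) + b * x) *
      ψ (a * (x + y) ^ (1 + 2 ^ e) + b * (x + y)) := by
    rw [sq, w8S, Finset.sum_mul_sum]
    refine Finset.sum_congr rfl fun x _ => ?_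
    exact (Equiv.sum_comp (Equiv.addLeft x) (fun y => ψ (a * x ^ (1 + 2 ^ e) + b * x) *
      ψ (a * y ^ (1 + 2 ^ e) + b * y))).symm
  rw [h1, Finset.sum_comm, w8R, Finset.sum_filter, Finset.mul_sum]
  refine Finset.sum_congr rfl fun y _ => ?_
  have h4 := (w8_bij (F := F) e).sum_comp
    (fun x => ψ (x * (a * y + a ^ 2 ^ e * (y ^ 2 ^ e) ^ 2 ^ e)))
  rw [AddChar.sum_mulShift _ hψ] at h4
  simp only [w8_bil ψ h2, ← mul_assoc, w8_sq, one_mul]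
  rw [← Finset.mul_sum, h4]
  split_ifs <;> simp [mul_comm]

theorem w8_S_four (ψ : AddChar F ℤ) (hψ : ψ.IsPrimitive) (h2 : ∀ x, ψ (x ^ 2) = ψ x)
    (e : ℕ) (a b : F) :
    w8S ψ e a b ^ 2 * w8S ψ e a b ^ 2 =
      (Fintype.card F * (w8R F e a).card : ℤ) * w8S ψ e a b ^ 2 := by
  rw [w8_S_sq ψ hψ h2]
  set T := ∑ y ∈ w8R F e a, ψ (a * y ^ (1 + 2 ^ e) + b * y) with hT
  have hTT : T * T = (w8R F e a).card * T := by
    conv_lhs => rw [hT, Finset.sum_mul]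
    rw [Finset.sum_congr rfl (g := fun _ => T)]
    · simp
    intro z hz
    rw [hT, Finset.mul_sum]
    have hz' := hz
    simp only [w8R, Finset.mem_filter, Finset.mem_univ, true_and] at hz
    have key : ∀ y, ψ (a * z ^ (1 + 2 ^ e) + b * z) * ψ (a * y ^ (1 + 2 ^ e) + b * y) =
        ψ (a * (y + z) ^ (1 + 2 ^ e) + b * (y + z)) := by
      intro y
      rw [w8_bil ψ h2, hz, mul_zero, AddChar.map_zero_eq_one, mul_one, mul_comm]
    have hadd : ∀ y ∈ w8R F e a, y + z ∈ w8R F e a := by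
      intro y hy
      simp only [w8R, Finset.mem_filter, Finset.mem_univ, true_and] at hy ⊢
      rw [add_pow_char_pow, add_pow_char_pow]
      linear_combination hy + hz
    have hzz : ∀ y : F, y + z + z = y := fun y => by
      rw [add_assoc, CharTwo.add_self_eq_zero, add_zero]
    refine Finset.sum_nbij' (fun y => y + z) (fun y => y + z) hadd hadd ?_ ?_ ?_
    · intro y _; exact hzz y
    · intro y _; exact hzz y
    · intro y _; exact key y
  linear_combination (Fintype.card F : ℤ) ^ 2 * hTT

theorem w8_S_parseval (ψ : AddChar F ℤ) (hψ : ψ.IsPrimitive)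
    (e : ℕ) (a : F) :
    ∑ b, w8S ψ e a b ^ 2 = (Fintype.card F : ℤ) ^ 2 := by
  have h1 : ∀ b, w8S ψ e a b ^ 2 = ∑ x : F, ∑ y : F, ψ (a * x ^ (1 + 2 ^ e)) *
      ψ (a * y ^ (1 + 2 ^ e)) * ψ (b * (x + y)) := by
    intro b
    rw [sq, w8S, Finset.sum_mul_sum]
    refine Finset.sum_congr rfl fun x _ => Finset.sum_congr rfl fun y _ => ?_
    simp only [← AddChar.map_add_eq_mul]
    congr 1
    ring
  simp only [h1]
  rw [Finset.sum_comm]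
  rw [Finset.sum_congr rfl (g := fun _ => (Fintype.card F : ℤ))]
  · simp [sq]
  intro x _
  rw [Finset.sum_comm]
  simp only [← Finset.mul_sum, AddChar.sum_mulShift _ hψ]
  rw [Finset.sum_eq_single x]
  · rw [w8_sq, CharTwo.add_self_eq_zero]; simp
  · intro y _ hy
    rw [if_neg]
    · simp
    · rw [CharTwo.add_eq_zero]; exact fun h => hy h.symm
  · simp

theorem w8_moment (ψ : AddChar F ℤ) (hψ : ψ.IsPrimitive) (h2 : ∀ x, ψ (x ^ 2) = ψ x)
    (e : ℕ) (j : ℕ) :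
    ∑ a, ∑ b, w8S ψ e a b ^ (2 * (j + 1)) =
      (Fintype.card F : ℤ) ^ 2 * ((Fintype.card F : ℤ) ^ j *
        ∑ a, ((w8R F e a).card : ℤ) ^ j) := by
  have h : ∀ a b, w8S ψ e a b ^ (2 * (j + 1)) =
      (Fintype.card F * (w8R F e a).card : ℤ) ^ j * w8S ψ e a b ^ 2 := by
    intro a b
    induction j with
    | zero => simp
    | succ j ih =>
      rw [mul_add, pow_add, ih, mul_one, mul_assoc, w8_S_four ψ hψ h2]; ring
  simp only [h, ← Finset.mul_sum, w8_S_parseval ψ hψ]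
  rw [Finset.mul_sum, Finset.mul_sum]
  refine Finset.sum_congr rfl fun a _ => ?_
  ring

/-- supports of words in the extended code -/
def w8code (F : Type*) [Field F] [Fintype F] [DecidableEq F] (e : ℕ) : Finset (Finset F) :=
  univ.filter fun D => ∑ x ∈ D, x = 0 ∧ ∑ x ∈ D, x ^ (1 + 2 ^ e) = 0

theorem w8_moment_code (ψ : AddChar F ℤ) (hψ : ψ.IsPrimitive) (e r : ℕ) :
    ∑ a, ∑ b, w8S ψ e a b ^ r = (Fintype.card F : ℤ) ^ 2 *
      ∑ D ∈ w8code F e, w8p (Fintype.card F) r D.card := by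
  have hprod : ∀ (D : Finset F) (f : F → F), ψ (∑ x ∈ D, f x) = ∏ x ∈ D, ψ (f x) := by
    intro D f
    induction D using Finset.induction_on with
    | empty => simp
    | insert x D hx ih =>
      rw [Finset.sum_insert hx, Finset.prod_insert hx, AddChar.map_add_eq_mul, ih]
  have h1 : ∀ a b, w8S ψ e a b ^ r = ∑ D : Finset F, w8p (Fintype.card F) r D.card *
      (ψ (a * ∑ x ∈ D, x ^ (1 + 2 ^ e)) * ψ (b * ∑ x ∈ D, x)) := by
    intro a b
    rw [w8S, w8_pow_expand _ (fun x => w8_sq ψ _)]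
    refine Finset.sum_congr rfl fun D _ => ?_
    congr 1
    rw [← hprod, ← AddChar.map_add_eq_mul, Finset.sum_add_distrib,
      Finset.mul_sum, Finset.mul_sum]
  simp only [h1]
  have h2 : ∀ a : F, ∑ b : F, ∑ D : Finset F, w8p (Fintype.card F) r D.card *
      (ψ (a * ∑ x ∈ D, x ^ (1 + 2 ^ e)) * ψ (b * ∑ x ∈ D, x)) =
      ∑ D : Finset F, ∑ b : F, w8p (Fintype.card F) r D.card *
      (ψ (a * ∑ x ∈ D, x ^ (1 + 2 ^ e)) * ψ (b * ∑ x ∈ D, x)) := fun a => Finset.sum_comm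
  simp only [h2]
  rw [Finset.sum_comm, w8code, Finset.sum_filter, Finset.mul_sum]
  refine Finset.sum_congr rfl fun D _ => ?_
  simp only [← Finset.mul_sum, ← Finset.sum_mul, AddChar.sum_mulShift _ hψ]
  by_cases hA : ∑ x ∈ D, x = 0 <;> by_cases hB : ∑ x ∈ D, x ^ (1 + 2 ^ e) = 0 <;>
    simp [hA, hB] <;> ring

end Moments

theorem w8_coset {G : Type*} [CommGroup G] [Fintype G] [DecidableEq G] [IsCyclic G] (d : ℕ)
    (g x₀ : G) (h : x₀ ^ d * g = 1) :
    #{x : G | x ^ d * g = 1} = (Fintype.card G).gcd d := by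
  have h1 := IsCyclic.card_powMonoidHom_ker (G := G) d
  rw [Nat.card_eq_fintype_card (α := G)] at h1
  rw [← h1, Nat.card_eq_fintype_card, ← Fintype.card_coe]
  refine Fintype.card_congr
    { toFun := fun x => ⟨x.1 * x₀⁻¹, ?_⟩
      invFun := fun x => ⟨x.1 * x₀, ?_⟩
      left_inv := ?_
      right_inv := ?_ }
  · have hx := x.2
    simp only [Finset.mem_filter, Finset.mem_univ, true_and] at hx
    rw [MonoidHom.mem_ker, powMonoidHom_apply, mul_pow, inv_pow, mul_inv_eq_one]
    exact mul_right_cancel (hx.trans h.symm)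
  · have hx := x.2
    rw [MonoidHom.mem_ker, powMonoidHom_apply] at hx
    simp only [Finset.mem_filter, Finset.mem_univ, true_and]
    rw [mul_pow, hx, one_mul, h]
  · intro x; simp
  · intro x; simp

theorem w8_sum_units {F : Type*} [Field F] [Fintype F] [DecidableEq F] (f : F → ℤ) :
    ∑ x, f x = f 0 + ∑ u : Fˣ, f u := by
  rw [← Finset.add_sum_erase univ f (Finset.mem_univ 0)]
  congr 1
  symm
  refine Finset.sum_bij (fun u _ => (u : F)) ?_ ?_ ?_ ?_
  · intro u _; simp
  · intro u _ v _ h; exact Units.ext h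
  · intro x hx
    exact ⟨Units.mk0 x (by simpa using hx), by simp, rfl⟩
  · intro u _; rfl

theorem w8_R_sum {F : Type*} [Field F] [Fintype F] [DecidableEq F] [CharP F 2] (m e : ℕ)
    (hq : Fintype.card F = 2 ^ m) (h1 : Nat.gcd m e = 2) (h2 : Nat.gcd m (2 * e) = 4)
    (j : ℕ) (K : ℤ) (hK : 16 ^ j = 1 + 15 * K) :
    ∑ a, ((w8R F e a).card : ℤ) ^ j =
      (Fintype.card F : ℤ) ^ j + (Fintype.card F - 1) * (1 + 3 * K) := by
  have hU : Fintype.card Fˣ = 2 ^ m - 1 := by rw [Fintype.card_units, hq]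
  obtain ⟨t, ht⟩ : ∃ t, 2 ^ e = t + 1 := ⟨2 ^ e - 1, by have := Nat.one_le_two_pow (n := e); omega⟩
  have hg1 : (Fintype.card Fˣ).gcd t = 3 := by
    have : t = 2 ^ e - 1 := by omega
    rw [hU, this, Nat.pow_sub_one_gcd_pow_sub_one, h1]; norm_num
  have hg2 : (Fintype.card Fˣ).gcd (t * (t + 2)) = 15 := by
    have : t * (t + 2) = 2 ^ (2 * e) - 1 := by
      rw [mul_comm 2 e, pow_mul, ht]
      have : (t + 1) ^ 2 = t * (t + 2) + 1 := by ring
      omega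
    rw [hU, this, Nat.pow_sub_one_gcd_pow_sub_one, h2]; norm_num
  -- fibre counts
  let c : Fˣ → ℕ := fun u => #{y : Fˣ | y ^ (t * (t + 2)) * u ^ t = 1}
  have hc : ∀ u, c u = 0 ∨ c u = 15 := by
    intro u
    by_cases h : ∃ y₀ : Fˣ, y₀ ^ (t * (t + 2)) * u ^ t = 1
    · right
      obtain ⟨y₀, h⟩ := h
      rw [← hg2]
      exact w8_coset _ _ y₀ h
    · left
      push Not at h
      simp [c, h]
  have hsum : ∑ u, (c u : ℤ) = 3 * Fintype.card Fˣ := by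
    have h3 : ∑ u, c u = 3 * Fintype.card Fˣ := by
      simp only [c, Finset.card_filter]
      rw [Finset.sum_comm]
      rw [Finset.sum_congr rfl (g := fun _ => 3)]
      · simp [mul_comm]
      intro y _
      rw [← Finset.card_filter, ← hg1, ← w8_coset t (y ^ (t * (t + 2))) (y ^ (t + 2))⁻¹]
      · simp only [mul_comm]
      · rw [inv_pow, ← pow_mul, mul_comm t, inv_mul_cancel]
    exact_mod_cast h3
  have hR : ∀ u : Fˣ, ((w8R F e (u : F)).card : ℤ) = 1 + c u := by
    intro u
    simp only [w8R, c, Finset.card_filter]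
    push_cast
    rw [w8_sum_units]
    congr 1
    · simp
    refine Finset.sum_congr rfl fun y _ => ?_
    congr 1
    rw [CharTwo.add_eq_zero, ← Units.val_pow_eq_pow_val, ← Units.val_pow_eq_pow_val,
      ← Units.val_pow_eq_pow_val, ← Units.val_mul, ← Units.val_mul, Units.val_inj, ht,
      ← pow_mul]
    have h5 : u ^ (t + 1) * y ^ ((t + 1) * (t + 1)) = (y ^ (t * (t + 2)) * u ^ t) * (u * y) := by
      have : (t + 1) * (t + 1) = t * (t + 2) + 1 := by ring
      rw [this, pow_succ, pow_succ, mul_mul_mul_comm, mul_comm (u ^ t)]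
    rw [h5, eq_iff_iff, right_eq_mul]
  rw [w8_sum_units]
  congr 1
  · congr 2
    have : w8R F e (0 : F) = univ := by
      ext y; simp [w8R]
    rw [this, Finset.card_univ]
  have hlin : ∀ u : Fˣ, ((w8R F e (u : F)).card : ℤ) ^ j = 1 + c u * K := by
    intro u
    rw [hR]
    rcases hc u with h | h
    · rw [h]; simp
    · rw [h]; push_cast; rw [← hK]
  simp only [hlin, Finset.sum_add_distrib, ← Finset.sum_mul, hsum]
  have h6 : (Fintype.card Fˣ : ℤ) = Fintype.card F - 1 := by
    rw [Fintype.card_units, Nat.cast_sub Fintype.card_pos]; simp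
  simp [h6]
  ring

theorem w8p_zero_of_odd (q : ℤ) (r : ℕ) : ∀ w, (r + w) % 2 = 1 → w8p q r w = 0 := by
  induction r with
  | zero => intro w hw; simp [w8p]; omega
  | succ r ih =>
    intro w hw
    rw [w8p, ih (w + 1) (by omega)]
    rcases Nat.eq_zero_or_pos w with h | h
    · simp [h]
    · rw [ih (w - 1) (by omega)]; ring

theorem w8_count {F : Type*} [Field F] [Fintype F] [DecidableEq F] [Algebra (ZMod 2) F] [CharP F 2]
    (m e : ℕ)
    (hq : Fintype.card F = 2 ^ m) (h1 : Nat.gcd m e = 2)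
    (h2 : Nat.gcd m (2 * e) = 4) (q : ℤ) (hqq : q = Fintype.card F) :
    315 * 128 * (#{D ∈ w8code F e | D.card = 8} : ℤ) =
      q * (q - 1) * (q ^ 4 - 27 * q ^ 3 + 184 * q ^ 2 + 1044 * q + 6448) := by
  obtain ⟨ψ, hψ, hfr⟩ := w8_exists_char F
  have hq0 : (Fintype.card F : ℤ) ^ 2 ≠ 0 := by
    have := Fintype.card_ne_zero (α := F)
    positivity
  let A : ℕ → ℤ := fun w => (#{D ∈ w8code F e | D.card = w} : ℤ)
  have key : ∀ (j : ℕ) (K : ℤ), 16 ^ j = 1 + 15 * K →  2 * (j + 1) ≤ 8 →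
      ∑ w ∈ Finset.range 9, A w * w8p q (2 * (j + 1)) w =
        q ^ j * (q ^ j + (q - 1) * (1 + 3 * K)) := by
    intro j K hK hj
    have ha := w8_moment ψ hψ hfr e j
    rw [w8_moment_code ψ hψ, w8_R_sum m e hq h1 h2 j K hK] at ha
    have hb := mul_left_cancel₀ hq0 ha
    rw [← hqq] at hb
    rw [← hb]
    have hs : ∀ D : Finset F, w8p q (2 * (j + 1)) D.card =
        ∑ w ∈ Finset.range 9, if D.card = w then w8p q (2 * (j + 1)) w else 0 := by
      intro D
      rw [Finset.sum_ite_eq]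
      split_ifs with h
      · rfl
      · rw [w8p_zero_of_lt]
        simp at h
        omega
    simp only [hs]
    rw [Finset.sum_comm]
    refine Finset.sum_congr rfl fun w _ => ?_
    rw [← Finset.sum_filter, Finset.sum_const, nsmul_eq_mul]
  have hA0 : A 0 = 1 := by
    have : {D ∈ w8code F e | D.card = 0} = {∅} := by
      ext D
      simp only [Finset.mem_filter, Finset.card_eq_zero, Finset.mem_singleton]
      constructor
      · exact fun h => h.2
      · rintro rfl; simp [w8code]
    change ((#{D ∈ w8code F e | D.card = 0} : ℕ) : ℤ) = 1
    rw [this]; simp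
  have k1 := key 0 0 (by norm_num) (by norm_num)
  have k2 := key 1 1 (by norm_num) (by norm_num)
  have k3 := key 2 17 (by norm_num) (by norm_num)
  have k4 := key 3 273 (by norm_num) (by norm_num)
  have p0_0 : w8p q 0 0 = (1) * q ^ 0 := by simp [w8p]
  have p1_1 : w8p q 1 1 = (1) * q ^ 0 := by
    rw [w8p]; norm_num [p0_0, w8p_zero_of_lt q 0 2 (by norm_num)]; try ring
  have p2_0 : w8p q 2 0 = (1) * q ^ 1 := by
    rw [w8p]; norm_num [p1_1]; try ring
  have p2_2 : w8p q 2 2 = (2) * q ^ 0 := by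
    rw [w8p]; norm_num [p1_1, w8p_zero_of_lt q 1 3 (by norm_num)]; try ring
  have p3_1 : w8p q 3 1 = (-2) * q ^ 0 + (3) * q ^ 1 := by
    rw [w8p]; norm_num [p2_0, p2_2]; try ring
  have p3_3 : w8p q 3 3 = (6) * q ^ 0 := by
    rw [w8p]; norm_num [p2_2, w8p_zero_of_lt q 2 4 (by norm_num)]; try ring
  have p4_0 : w8p q 4 0 = (-2) * q ^ 1 + (3) * q ^ 2 := by
    rw [w8p]; norm_num [p3_1]; try ring
  have p4_2 : w8p q 4 2 = (-16) * q ^ 0 + (12) * q ^ 1 := by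
    rw [w8p]; norm_num [p3_1, p3_3]; try ring
  have p4_4 : w8p q 4 4 = (24) * q ^ 0 := by
    rw [w8p]; norm_num [p3_3, w8p_zero_of_lt q 3 5 (by norm_num)]; try ring
  have p5_1 : w8p q 5 1 = (16) * q ^ 0 + (-30) * q ^ 1 + (15) * q ^ 2 := by
    rw [w8p]; norm_num [p4_0, p4_2]; try ring
  have p5_3 : w8p q 5 3 = (-120) * q ^ 0 + (60) * q ^ 1 := by
    rw [w8p]; norm_num [p4_2, p4_4]; try ring
  have p5_5 : w8p q 5 5 = (120) * q ^ 0 := by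
    rw [w8p]; norm_num [p4_4, w8p_zero_of_lt q 4 6 (by norm_num)]; try ring
  have p6_0 : w8p q 6 0 = (16) * q ^ 1 + (-30) * q ^ 2 + (15) * q ^ 3 := by
    rw [w8p]; norm_num [p5_1]; try ring
  have p6_2 : w8p q 6 2 = (272) * q ^ 0 + (-300) * q ^ 1 + (90) * q ^ 2 := by
    rw [w8p]; norm_num [p5_1, p5_3]; try ring
  have p6_4 : w8p q 6 4 = (-960) * q ^ 0 + (360) * q ^ 1 := by
    rw [w8p]; norm_num [p5_3, p5_5]; try ring
  have p6_6 : w8p q 6 6 = (720) * q ^ 0 := by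
    rw [w8p]; norm_num [p5_5, w8p_zero_of_lt q 5 7 (by norm_num)]; try ring
  have p7_1 : w8p q 7 1 = (-272) * q ^ 0 + (588) * q ^ 1 + (-420) * q ^ 2 + (105) * q ^ 3 := by
    rw [w8p]; norm_num [p6_0, p6_2]; try ring
  have p7_3 : w8p q 7 3 = (3696) * q ^ 0 + (-2940) * q ^ 1 + (630) * q ^ 2 := by
    rw [w8p]; norm_num [p6_2, p6_4]; try ring
  have p7_5 : w8p q 7 5 = (-8400) * q ^ 0 + (2520) * q ^ 1 := by
    rw [w8p]; norm_num [p6_4, p6_6]; try ring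
  have p7_7 : w8p q 7 7 = (5040) * q ^ 0 := by
    rw [w8p]; norm_num [p6_6, w8p_zero_of_lt q 6 8 (by norm_num)]; try ring
  have p8_0 : w8p q 8 0 = (-272) * q ^ 1 + (588) * q ^ 2 + (-420) * q ^ 3 + (105) * q ^ 4 := by
    rw [w8p]; norm_num [p7_1]; try ring
  have p8_2 : w8p q 8 2 = (-7936) * q ^ 0 + (10752) * q ^ 1 + (-5040) * q ^ 2 + (840) * q ^ 3 := by
    rw [w8p]; norm_num [p7_1, p7_3]; try ring
  have p8_4 : w8p q 8 4 = (48384) * q ^ 0 + (-30240) * q ^ 1 + (5040) * q ^ 2 := by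
    rw [w8p]; norm_num [p7_3, p7_5]; try ring
  have p8_6 : w8p q 8 6 = (-80640) * q ^ 0 + (20160) * q ^ 1 := by
    rw [w8p]; norm_num [p7_5, p7_7]; try ring
  have p8_8 : w8p q 8 8 = (40320) * q ^ 0 := by
    rw [w8p]; norm_num [p7_7, w8p_zero_of_lt q 7 9 (by norm_num)]; try ring
  have o : ∀ r w : ℕ, (r + w) % 2 = 1 → w8p q r w = 0 := w8p_zero_of_odd q
  norm_num only [Finset.sum_range_succ, Finset.sum_range_zero] at k1 k2 k3 k4
  rw [p2_0, p2_2, w8p_zero_of_lt q 2 4 (by norm_num), w8p_zero_of_lt q 2 6 (by norm_num), w8p_zero_of_lt q 2 8 (by norm_num), o 2 1 (by norm_num), o 2 3 (by norm_num), o 2 5 (by norm_num), o 2 7 (by norm_num), hA0] at k1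
  rw [p4_0, p4_2, p4_4, w8p_zero_of_lt q 4 6 (by norm_num), w8p_zero_of_lt q 4 8 (by norm_num), o 4 1 (by norm_num), o 4 3 (by norm_num), o 4 5 (by norm_num), o 4 7 (by norm_num), hA0] at k2
  rw [p6_0, p6_2, p6_4, p6_6, w8p_zero_of_lt q 6 8 (by norm_num), o 6 1 (by norm_num), o 6 3 (by norm_num), o 6 5 (by norm_num), o 6 7 (by norm_num), hA0] at k3
  rw [p8_0, p8_2, p8_4, p8_6, p8_8, o 8 1 (by norm_num), o 8 3 (by norm_num), o 8 5 (by norm_num), o 8 7 (by norm_num), hA0] at k4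
  change 315 * 128 * A 8 = _
  clear_value A
  have hA2 : A 2 = 0 := by linarith
  rw [hA2] at k2 k3 k4
  linear_combination k4 - ((-112) * q ^ 0 + (28) * q ^ 1) * k3 +
    (((-112) * q ^ 0 + (28) * q ^ 1) * ((-40) * q ^ 0 + (15) * q ^ 1) - ((2016) * q ^ 0 + (-1260) * q ^ 1 + (210) * q ^ 2)) * k2

theorem w8_coprime (m e : ℕ) (hm : 4 ≤ m) (he1 : 1 ≤ e) (heM : 2 * e ≤ m)
    (α : GaloisField 2 m) (hα : orderOf α = 2 ^ m - 1) :
    IsCoprime (minpoly (ZMod 2) α) (minpoly (ZMod 2) (α ^ (1 + 2 ^ e))) := by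
  have hintg : ∀ x : GaloisField 2 m, IsIntegral (ZMod 2) x := fun x =>
    Algebra.IsIntegral.isIntegral x
  rw [(minpoly.irreducible (hintg α)).coprime_iff_not_dvd]
  intro hdvd
  have hassoc := (minpoly.irreducible (hintg α)).associated_of_dvd
    (minpoly.irreducible (hintg (α ^ (1 + 2 ^ e)))) hdvd
  have heq := eq_of_monic_of_associated (minpoly.monic (hintg _)) (minpoly.monic (hintg _)) hassoc
  have hroot : Polynomial.aeval (α ^ (1 + 2 ^ e)) (minpoly (ZMod 2) α) = 0 := by
    rw [heq]; exact minpoly.aeval _ _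
  obtain ⟨τ, hτ⟩ := minpoly.exists_algEquiv_of_root' (hintg α).isAlgebraic hroot
  obtain ⟨⟨i, hi⟩, hi2⟩ :=
    (FiniteField.bijective_frobeniusAlgEquivOfAlgebraic_pow (ZMod 2) (GaloisField 2 m)).2 τ
  rw [GaloisField.finrank 2 (by omega)] at hi
  simp only at hi2
  rw [← hi2, AlgEquiv.coe_pow, FiniteField.coe_frobeniusAlgEquivOfAlgebraic_iterate,
    ZMod.card] at hτ
  simp only at hτ
  have hm2 : 2 ^ m = 2 * 2 ^ (m - 1) := by rw [← pow_succ']; congr 1; omega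
  have hm3 : 2 ^ 3 ≤ 2 ^ (m - 1) := Nat.pow_le_pow_right (by norm_num) (by omega)
  have hi3 : 2 ^ i ≤ 2 ^ (m - 1) := Nat.pow_le_pow_right (by norm_num) (by omega)
  have he3 : 2 ^ e ≤ 2 ^ (m - 1) := Nat.pow_le_pow_right (by norm_num) (by omega)
  have hpow := pow_injOn_Iio_orderOf (x := α) (by rw [Set.mem_Iio, hα]; omega)
    (by rw [Set.mem_Iio, hα]; omega) hτ
  have hee : 2 ^ e = 2 * 2 ^ (e - 1) := by rw [← pow_succ']; congr 1; omega
  have hpos : 0 < 2 ^ e := by positivity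
  rcases Nat.eq_zero_or_pos i with h0 | h0
  · rw [h0] at hpow; omega
  · have hii : 2 ^ i = 2 * 2 ^ (i - 1) := by rw [← pow_succ']; congr 1; omega
    omega

theorem w8_mem_CE (m e : ℕ) (hm : 4 ≤ m) (he1 : 1 ≤ e) (heM : 2 * e ≤ m)
    (α : GaloisField 2 m) (hα : orderOf α = 2 ^ m - 1) (c : Fin (2 ^ m - 1) → ZMod 2) :
    c ∈ CE m e α ↔ (∑ i, algebraMap (ZMod 2) (GaloisField 2 m) (c i) * α ^ (i : ℕ) = 0 ∧
      ∑ i, algebraMap (ZMod 2) (GaloisField 2 m) (c i) * (α ^ (i : ℕ)) ^ (1 + 2 ^ e) = 0) := by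
  have h1 : ∀ x : GaloisField 2 m, minpoly (ZMod 2) x ∣ codePoly c ↔
      ∑ i, algebraMap (ZMod 2) (GaloisField 2 m) (c i) * x ^ (i : ℕ) = 0 := by
    intro x
    rw [minpoly.dvd_iff, codePoly, map_sum]
    simp
  have h2 : gE m e α ∣ codePoly c ↔ minpoly (ZMod 2) α ∣ codePoly c ∧
      minpoly (ZMod 2) (α ^ (1 + 2 ^ e)) ∣ codePoly c :=
    ⟨fun h => ⟨dvd_trans (dvd_mul_right _ _) h, dvd_trans (dvd_mul_left _ _) h⟩,
      fun h => (w8_coprime m e hm he1 heM α hα).mul_dvd h.1 h.2⟩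
  change gE m e α ∣ codePoly c ↔ _
  rw [h2, h1, h1]
  simp only [pow_right_comm α _ (1 + 2 ^ e)]

theorem w8_transfer (m e : ℕ) [Fintype (GaloisField 2 m)] [DecidableEq (GaloisField 2 m)]
    (hm : 4 ≤ m) (he1 : 1 ≤ e) (heM : 2 * e ≤ m)
    (hq : Fintype.card (GaloisField 2 m) = 2 ^ m)
    (α : GaloisField 2 m) (hα : orderOf α = 2 ^ m - 1) :
    {c : Fin (2 ^ m) → ZMod 2 | c ∈ CEbar m e α ∧ hammingNorm c = 8}.ncard =
      #{D ∈ w8code (GaloisField 2 m) e | D.card = 8} := by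
  have hm1 : 2 ^ 4 ≤ 2 ^ m := Nat.pow_le_pow_right (by norm_num) hm
  have hα0 : α ≠ 0 := by
    rintro rfl
    rw [orderOf_zero] at hα
    omega
  let pt : Fin (2 ^ m) → GaloisField 2 m := fun i => if (i : ℕ) < 2 ^ m - 1 then α ^ (i : ℕ) else 0
  have hinj : Function.Injective pt := by
    intro i j hij
    simp only [pt] at hij
    have hi := i.2
    have hj := j.2
    split_ifs at hij with h1 h2 h2
    · exact Fin.ext (pow_injOn_Iio_orderOf (x := α) (by rw [Set.mem_Iio, hα]; exact h1)
        (by rw [Set.mem_Iio, hα]; exact h2) hij)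
    · exact absurd hij (pow_ne_zero _ hα0)
    · exact absurd hij.symm (pow_ne_zero _ hα0)
    · exact Fin.ext (by omega)
  have hbij : Function.Bijective pt := by
    rw [Fintype.bijective_iff_injective_and_card]
    exact ⟨hinj, by rw [hq, Fintype.card_fin]⟩
  let Φ : (Fin (2 ^ m) → ZMod 2) → Finset (GaloisField 2 m) := fun c =>
    (univ.filter fun i => c i ≠ 0).map ⟨pt, hinj⟩
  have hcast : ∀ a : ZMod 2, a = if a ≠ 0 then 1 else 0 := by decide
  have hsum : ∀ (c : Fin (2 ^ m) → ZMod 2) (k : ℕ), k ≠ 0 →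
      ∑ i : Fin (2 ^ m - 1), algebraMap (ZMod 2) (GaloisField 2 m)
        (c (Fin.castLE (Nat.sub_le _ _) i)) * (α ^ (i : ℕ)) ^ k = ∑ x ∈ Φ c, x ^ k := by
    intro c k hk
    rw [Finset.sum_map, Finset.sum_filter]
    refine Fintype.sum_of_injective (Fin.castLE (Nat.sub_le _ _)) (Fin.castLE_injective _) _ _ ?_ ?_
    · intro i hi
      have : ¬ (i : ℕ) < 2 ^ m - 1 := fun h => hi ⟨⟨i, h⟩, rfl⟩
      simp [pt, this, hk]
    · intro i
      have h1 : pt (Fin.castLE (Nat.sub_le _ _) i) = α ^ (i : ℕ) := by simp [pt]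
      simp only [Function.Embedding.coeFn_mk, h1]
      conv_lhs => rw [hcast (c _)]
      split_ifs <;> simp
  have hmem : ∀ c : Fin (2 ^ m) → ZMod 2, (c ∈ CEbar m e α ∧ hammingNorm c = 8) ↔
      Φ c ∈ ({D ∈ w8code (GaloisField 2 m) e | D.card = 8} : Finset _) := by
    intro c
    have h8 : (Φ c).card = hammingNorm c := by
      simp only [Φ, Finset.card_map]
      rfl
    have hpar : hammingNorm c = 8 → ∑ i, c i = 0 := by
      intro h
      have h3 : ∑ i, c i = (hammingNorm c : ZMod 2) := by
        rw [hammingNorm, Finset.card_filter]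
        push_cast
        exact Finset.sum_congr rfl fun i _ => hcast (c i)
      rw [h3, h]
      decide
    have hce := w8_mem_CE m e hm he1 heM α hα (fun i => c (Fin.castLE (Nat.sub_le _ _) i))
    have hs1 := hsum c 1 one_ne_zero
    have hs2 := hsum c (1 + 2 ^ e) (by positivity)
    simp only [pow_one] at hs1
    rw [hs1, hs2] at hce
    rw [Finset.mem_filter, h8, w8code, Finset.mem_filter]
    simp only [Finset.mem_univ, true_and]
    rw [← hce]
    constructor
    · rintro ⟨h, h'⟩; exact ⟨h.1, h'⟩
    · rintro ⟨h, h'⟩; exact ⟨⟨h, hpar h'⟩, h'⟩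
  rw [← Set.ncard_coe_finset]
  refine Set.ncard_congr (fun c _ => Φ c) ?_ ?_ ?_
  · intro c hc
    exact Finset.mem_coe.mpr ((hmem c).mp hc)
  · intro c d _ _ h
    have h1 := Finset.map_injective _ h
    funext i
    have h2 : c i ≠ 0 ↔ d i ≠ 0 := by
      have := congrArg (fun s => i ∈ s) h1
      simpa using this
    rw [hcast (c i), hcast (d i)]
    simp only [h2]
  · intro D hD
    have hΦ : Φ (fun i => if pt i ∈ D then 1 else 0) = D := by
      ext x
      simp only [Φ, Finset.mem_map, Finset.mem_filter, Finset.mem_univ, true_and,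
        Function.Embedding.coeFn_mk]
      constructor
      · rintro ⟨i, hi, rfl⟩
        by_contra hx
        simp [hx] at hi
      · intro hx
        obtain ⟨i, rfl⟩ := hbij.2 x
        exact ⟨i, by simp [hx], rfl⟩
    refine ⟨fun i => if pt i ∈ D then 1 else 0, ?_, hΦ⟩
    rw [Set.mem_setOf_eq, hmem, hΦ]
    exact Finset.mem_coe.mp hD

end Weight8Aux

/-- For `m ≡ 0 (mod 4)` (with `m ≥ 4`) and `1 ≤ e ≤ m/2` with
`gcd(m,e) = 2`, the number of weight-8 codewords of `C̄_E` is
`Ā₈ = 2^{m−3}(2^m − 1)(2^{4m−4} − 27·2^{3m−4} + 23·2^{2m−1} + 261·2^{m−2} + 403)/315`. -/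
theorem number_of_weight_eight_codewords
    (m e : ℕ) (hm4 : m % 4 = 0) (hm : 4 ≤ m)
    (he1 : 1 ≤ e) (heM : 2 * e ≤ m) (hgcd : Nat.gcd m e = 2)
    (α : GaloisField 2 m) (hα : orderOf α = 2 ^ m - 1) :
    (315 : ℤ) * {c : Fin (2 ^ m) → ZMod 2 | c ∈ CEbar m e α ∧ hammingNorm c = 8}.ncard =
      2 ^ (m - 3) * (2 ^ m - 1) *
        (2 ^ (4 * m - 4) - 27 * 2 ^ (3 * m - 4) + 23 * 2 ^ (2 * m - 1)
          + 261 * 2 ^ (m - 2) + 403) := by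
  classical
  letI : Fintype (GaloisField 2 m) := Fintype.ofFinite _
  have hq : Fintype.card (GaloisField 2 m) = 2 ^ m := by
    rw [← Nat.card_eq_fintype_card, GaloisField.card 2 m (by omega)]
  have hg4 : Nat.gcd m (2 * e) = 4 := by
    obtain ⟨a, rfl⟩ : 4 ∣ m := Nat.dvd_of_mod_eq_zero hm4
    obtain ⟨b, rfl⟩ : 2 ∣ e := hgcd ▸ Nat.gcd_dvd_right _ _
    have h1 : 4 * a = 2 * (2 * a) := by ring
    rw [h1, Nat.gcd_mul_left] at hgcd
    have h2 : Nat.Coprime (2 * a) b := by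
      have : Nat.gcd (2 * a) b = 1 := by omega
      exact this
    have h3 : Nat.gcd a b = 1 := h2.coprime_mul_left
    have h4 : 2 * (2 * b) = 4 * b := by ring
    rw [h4, Nat.gcd_mul_left, h3]
  have hcount := w8_count (F := GaloisField 2 m) m e hq hgcd hg4 (2 ^ m) (by rw [hq]; push_cast; rfl)
  rw [w8_transfer m e hm he1 heM hq α hα]
  have e1 : (2 : ℤ) ^ m = 2 ^ (m - 3) * 8 := by
    rw [show (8 : ℤ) = 2 ^ 3 by norm_num, ← pow_add]; congr 1; omega
  have e2 : (2 : ℤ) ^ (4 * m - 4) * 16 = (2 ^ m) ^ 4 := by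
    rw [show (16 : ℤ) = 2 ^ 4 by norm_num, ← pow_add, ← pow_mul]; congr 1; omega
  have e3 : (2 : ℤ) ^ (3 * m - 4) * 16 = (2 ^ m) ^ 3 := by
    rw [show (16 : ℤ) = 2 ^ 4 by norm_num, ← pow_add, ← pow_mul]; congr 1; omega
  have e4 : (2 : ℤ) ^ (2 * m - 1) * 2 = (2 ^ m) ^ 2 := by
    rw [← pow_succ, ← pow_mul]; congr 1; omega
  have e5 : (2 : ℤ) ^ (m - 2) * 4 = 2 ^ m := by
    rw [show (4 : ℤ) = 2 ^ 2 by norm_num, ← pow_add]; congr 1; omega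
  generalize (2 : ℤ) ^ (4 * m - 4) = x4 at *
  generalize (2 : ℤ) ^ (3 * m - 4) = x3 at *
  generalize (2 : ℤ) ^ (2 * m - 1) = x2 at *
  generalize (2 : ℤ) ^ (m - 2) = x1 at *
  generalize (2 : ℤ) ^ (m - 3) = x0 at *
  generalize (2 : ℤ) ^ m = q at *
  have h128 : (128 : ℤ) ≠ 0 := by norm_num
  apply mul_left_cancel₀ h128
  linear_combination hcount + (q - 1) * (q ^ 4 - 27 * q ^ 3 + 184 * q ^ 2 + 1044 * q + 6448) * e1 -
    8 * x0 * (q - 1) * (e2 - 27 * e3 + 184 * e4 + 1044 * e5)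
end

section
/- Let C be a linear code of length v and dimension κ over the finite field F_q, with weight distribution (A_0, A_1, …, A_v), and let (A_0^⊥, …, A_v^⊥) be the weight distribution of its dual code C^⊥. Then the weight enumerators satisfy the MacWilliams identity: as polynomials in z, q^κ · ∑_{i=0}^{v} A_i^⊥ z^i = ∑_{i=0}^{v} A_i (1 − z)^i (1 + (q − 1)z)^{v−i}. -/
open Polynomial Finset

/-- The dual of a set of vectors over a commutative ring, as a submodule. -/
def dualCode {n : ℕ} {F : Type*} [CommRing F] (C : Set (Fin n → F)) :
    Submodule F (Fin n → F) where
  carrier := {y | ∀ c ∈ C, ∑ i, y i * c i = 0}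
  add_mem' := by
    intro a b ha hb c hc
    have h1 := ha c hc
    have h2 := hb c hc
    simp only [Pi.add_apply, add_mul, Finset.sum_add_distrib, h1, h2, add_zero]
  zero_mem' := by intro c hc; simp
  smul_mem' := by
    intro r a ha c hc
    have h1 := ha c hc
    simp only [Pi.smul_apply, smul_eq_mul, mul_assoc, ← Finset.mul_sum, h1, mul_zero]

theorem mw_map_sum {F ι : Type*} [Field F] (ψ : AddChar F ℂ) (s : Finset ι) (f : ι → F) :
    ψ (∑ i ∈ s, f i) = ∏ i ∈ s, ψ (f i) := by
  classical
  induction s using Finset.induction_on with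
  | empty => simp
  | insert a s ha ih =>
    rw [Finset.sum_insert ha, Finset.prod_insert ha, AddChar.map_add_eq_mul, ih]

theorem mw_regroup {v : ℕ} {F : Type} [Field F] [Fintype F] [DecidableEq F]
    (C : Submodule F (Fin v → F)) [DecidablePred (· ∈ C)] (g : ℕ → ℂ) :
    ∑ i ∈ Finset.range (v + 1),
      (({c : Fin v → F | c ∈ C ∧ hammingNorm c = i}.ncard : ℕ) : ℂ) * g i =
    ∑ c with c ∈ C, g (hammingNorm c) := by
  rw [← Finset.sum_fiberwise_of_maps_to (s := Finset.univ.filter (· ∈ C))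
    (t := Finset.range (v + 1)) (g := fun c => hammingNorm c)]
  · refine Finset.sum_congr rfl fun i _ => ?_
    rw [Finset.sum_congr rfl (g := fun _ => g i)]
    · rw [Finset.sum_const, nsmul_eq_mul, ← Set.ncard_coe_finset]
      congr 3
      ext c
      simp
    · intro c hc
      rw [(Finset.mem_filter.1 hc).2]
  · intro c _
    have := hammingNorm_le_card_fintype (x := c)
    simp at this ⊢
    omega

theorem mw_inner {v : ℕ} {F : Type} [Field F] [Fintype F] [DecidableEq F]
    (ψ : AddChar F ℂ) (hψ : ψ.IsPrimitive) (z : ℂ) (c : Fin v → F) :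
    ∑ y : Fin v → F, ψ (∑ i, y i * c i) * z ^ hammingNorm y =
      (1 - z) ^ hammingNorm c * (1 + ((Fintype.card F : ℂ) - 1) * z) ^ (v - hammingNorm c) := by
  have h1 : ∀ y : Fin v → F, ψ (∑ i, y i * c i) * z ^ hammingNorm y =
      ∏ i, (ψ (y i * c i) * if y i ≠ 0 then z else 1) := by
    intro y
    rw [Finset.prod_mul_distrib, mw_map_sum]
    congr 1
    rw [Finset.prod_ite]
    simp [hammingNorm]
  have h2 : ∀ b : F, ∑ a : F, (ψ (a * b) * if a ≠ 0 then z else 1) =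
      if b ≠ 0 then (1 - z) else (1 + ((Fintype.card F : ℂ) - 1) * z) := by
    intro b
    have h3 : ∀ a : F, (ψ (a * b) * if a ≠ 0 then z else 1) =
        z * ψ (a * b) + if a = 0 then 1 - z else 0 := by
      intro a
      by_cases ha : a = 0
      · simp [ha]
      · simp [ha, mul_comm]
    rw [Finset.sum_congr rfl fun a _ => h3 a, Finset.sum_add_distrib, ← Finset.mul_sum,
      AddChar.sum_mulShift b hψ]
    by_cases hb : b = 0
    · simp [hb]; ring
    · simp [hb]
  rw [Finset.sum_congr rfl fun y _ => h1 y]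
  have h4 := Finset.prod_univ_sum (fun _ : Fin v => (Finset.univ : Finset F))
    (fun i a => ψ (a * c i) * if a ≠ 0 then z else 1)
  rw [Fintype.piFinset_univ] at h4
  rw [← h4, Finset.prod_congr rfl fun i _ => h2 (c i), Finset.prod_ite, Finset.prod_const,
    Finset.prod_const]
  congr 2
  have h5 := Finset.card_filter_add_card_filter_not (s := (Finset.univ : Finset (Fin v)))
    (fun i => c i ≠ 0)
  rw [Finset.card_univ, Fintype.card_fin] at h5
  unfold hammingNorm
  omega

theorem mw_outer {v : ℕ} {F : Type} [Field F] [Fintype F] [DecidableEq F]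
    (ψ : AddChar F ℂ) (hψ : ψ.IsPrimitive) (C : Submodule F (Fin v → F))
    [DecidablePred (· ∈ C)] (y : Fin v → F) [Decidable (y ∈ dualCode (C : Set (Fin v → F)))] :
    ∑ c with c ∈ C, ψ (∑ i, y i * c i) =
      if y ∈ dualCode (C : Set (Fin v → F)) then
        (Fintype.card F : ℂ) ^ Module.finrank F C else 0 := by
  split_ifs with hy
  · rw [Finset.sum_congr rfl (g := fun _ => (1 : ℂ))]
    · rw [Finset.sum_const, nsmul_eq_mul, mul_one, ← Fintype.card_subtype]
      have := Module.card_eq_pow_finrank (K := F) (V := C)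
      exact_mod_cast this
    · intro c hc
      rw [hy c (Finset.mem_filter.1 hc).2, AddChar.map_zero_eq_one]
  · have h0 : ∃ c ∈ C, ∑ i, y i * c i ≠ 0 := by
      by_contra! h
      exact hy h
    obtain ⟨c, hc, hne⟩ := h0
    have h1 := (hψ hne)
    obtain ⟨a, ha⟩ := AddChar.ne_one_iff.1 h1
    rw [AddChar.mulShift_apply] at ha
    have hd : a • c ∈ C := C.smul_mem a hc
    have hs : ∑ i, y i * (a • c) i = (∑ i, y i * c i) * a := by
      rw [Finset.sum_mul]
      exact Finset.sum_congr rfl fun i _ => by simp; ring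
    have key : ψ ((∑ i, y i * c i) * a) * ∑ c with c ∈ C, ψ (∑ i, y i * c i) =
        ∑ c with c ∈ C, ψ (∑ i, y i * c i) := by
      rw [Finset.mul_sum]
      refine Finset.sum_equiv (Equiv.addLeft (a • c)) ?_ ?_
      · intro x
        simp only [Finset.mem_filter, Finset.mem_univ, true_and, Equiv.coe_addLeft]
        exact (C.add_mem_iff_right hd).symm
      · intro x _
        rw [← hs, ← AddChar.map_add_eq_mul, ← Finset.sum_add_distrib]
        simp only [Equiv.coe_addLeft, Pi.add_apply, mul_add]
    by_contra hS
    exact ha (mul_right_cancel₀ hS (key.trans (one_mul _).symm))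

/-- **MacWilliams identity.** If `C` is a `κ`-dimensional linear code of
length `v` over `F_q` with weight distribution `A_i`, and `A_i^⊥` is the weight
distribution of its dual, then for all `z`,
`q^κ · ∑ A_i^⊥ z^i = ∑ A_i (1 − z)^i (1 + (q − 1)z)^{v−i}`. -/
theorem macwilliams_identity
    (q v κ : ℕ) (hq : ∃ p s : ℕ, p.Prime ∧ 0 < s ∧ q = p ^ s)
    (F : Type) [Field F] [Fintype F] [DecidableEq F] (hF : Fintype.card F = q)
    (C : Submodule F (Fin v → F)) (hκ : Module.finrank F ↥C = κ)
    (A Adual : ℕ → ℕ)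
    (hA : ∀ i, A i = {c : Fin v → F | c ∈ C ∧ hammingNorm c = i}.ncard)
    (hAdual : ∀ i, Adual i =
      {y : Fin v → F | y ∈ dualCode (C : Set (Fin v → F)) ∧ hammingNorm y = i}.ncard) :
    ∀ z : ℚ,
      (q : ℚ) ^ κ * ∑ i ∈ Finset.range (v + 1), (Adual i : ℚ) * z ^ i =
      ∑ i ∈ Finset.range (v + 1),
        (A i : ℚ) * (1 - z) ^ i * (1 + ((q : ℚ) - 1) * z) ^ (v - i) := by
  classical
  intro z
  obtain ⟨ψ, hψ⟩ : ∃ ψ : AddChar F ℂ, ψ.IsPrimitive :=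
    ⟨AddChar.FiniteField.primitiveChar_to_Complex F, AddChar.FiniteField.primitiveChar_to_Complex_isPrimitive F⟩
  have hL := mw_regroup (dualCode (C : Set (Fin v → F))) (fun i => (z : ℂ) ^ i)
  have hR := mw_regroup C (fun i => (1 - (z : ℂ)) ^ i * (1 + ((q : ℂ) - 1) * z) ^ (v - i))
  simp only [← hA, ← hAdual] at hL hR
  have : (q : ℂ) ^ κ * ∑ i ∈ Finset.range (v + 1), (Adual i : ℂ) * (z : ℂ) ^ i =
      ∑ i ∈ Finset.range (v + 1),
        (A i : ℂ) * ((1 - (z : ℂ)) ^ i * (1 + ((q : ℂ) - 1) * z) ^ (v - i)) := by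
    rw [hL, hR, ← hF, ← hκ]
    rw [Finset.sum_congr rfl fun c _ => (mw_inner ψ hψ (z : ℂ) c).symm, Finset.sum_comm,
      Finset.mul_sum, Finset.sum_filter]
    refine Finset.sum_congr rfl fun y _ => ?_
    rw [← Finset.sum_mul, mw_outer ψ hψ C y]
    split_ifs <;> simp
  simp only [← mul_assoc] at this
  exact_mod_cast this
end

section
/- (Assmus–Mattson Theorem) Let C be a linear code of length v over F_q with minimum nonzero Hamming weight d, and let d^⊥ be the minimum nonzero Hamming weight of C^⊥. Let w be the largest integer with w ≤ v satisfying w − ⌊(w + q − 2)/(q − 1)⌋ < d, and let w^⊥ be the largest integer with w^⊥ ≤ v satisfying w^⊥ − ⌊(w^⊥ + q − 2)/(q − 1)⌋ < d^⊥. Fix a positive integer t with t < d, and let s be the number of indices i with 0 ≤ i ≤ v − t such that A_i^⊥ ≠ 0. Suppose s ≤ d − t. Then: (1) for every i with A_i ≠ 0 and d ≤ i ≤ w, the supports of the codewords of weight i in C form a t-design; and (2) for every i with A_i^⊥ ≠ 0 and d^⊥ ≤ i ≤ min{v − t, w^⊥}, the supports of the codewords of weight i in C^⊥ form a t-design. 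-/
open Polynomial Finset

namespace AM

set_option linter.unusedSectionVars false

theorem uniq (n : ℕ) : ∀ (I : Finset ℕ) (g : ℕ → ℕ) (f : ℕ → ℤ), Set.InjOn g I → I.card ≤ n →
    (∀ m < n, ∑ i ∈ I, f i * ((g i).choose m : ℤ) = 0) → ∀ i ∈ I, f i = 0 := by
  induction n with
  | zero =>
    intro I g f _ hc _ i hi
    have : I = ∅ := by simpa using hc
    simp [this] at hi
  | succ n ih =>
    intro I g f hg hc hm
    by_cases hI : I = ∅
    · simp [hI]
    obtain ⟨a, ha⟩ := Finset.nonempty_iff_ne_empty.mpr hI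
    have key : ∀ i ∈ I.erase a, f i * ((g i : ℤ) - g a) = 0 := by
      apply ih (I.erase a) g (fun i => f i * ((g i : ℤ) - g a))
      · exact hg.mono (by simp [Finset.coe_erase])
      · rw [Finset.card_erase_of_mem ha]; omega
      · intro m hmn
        have h0 := hm m (by omega)
        have h1 := hm (m+1) (by omega)
        have e : ∀ i, f i * ((g i : ℤ) - g a) * ((g i).choose m : ℤ)
            = (m + 1) * (f i * ((g i).choose (m+1) : ℤ))
              + ((m : ℤ) - g a) * (f i * ((g i).choose m : ℤ)) := by
          intro i
          have h2 : ((g i).choose (m+1) : ℤ) * (m + 1) = (g i).choose m * ((g i : ℤ) - m) := by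
            by_cases hle : m ≤ g i
            · have := Nat.choose_succ_right_eq (g i) m
              zify [hle] at this
              exact_mod_cast this
            · have h3 : (g i).choose m = 0 := Nat.choose_eq_zero_of_lt (by omega)
              have h4 : (g i).choose (m+1) = 0 := Nat.choose_eq_zero_of_lt (by omega)
              simp [h3, h4]
          linear_combination (- f i) * h2
        have hz : ∑ i ∈ I, f i * ((g i : ℤ) - g a) * ((g i).choose m : ℤ) = 0 := by
          rw [Finset.sum_congr rfl (fun i _ => e i), Finset.sum_add_distrib, ← Finset.mul_sum,
            ← Finset.mul_sum, h0, h1]; simp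
        rw [← Finset.add_sum_erase _ _ ha] at hz
        simpa using hz
    have key2 : ∀ i ∈ I.erase a, f i = 0 := by
      intro i hi
      have := key i hi
      rcases mul_eq_zero.mp this with h | h
      · exact h
      · exfalso
        have h5 : g i = g a := by omega
        exact (Finset.mem_erase.mp hi).1 (hg (Finset.mem_erase.mp hi).2 ha h5)
    have h0 := hm 0 (by omega)
    rw [← Finset.add_sum_erase _ _ ha, Finset.sum_eq_zero (s := I.erase a)] at h0
    · intro i hi
      by_cases hia : i = a
      · subst hia; simpa using h0
      · exact key2 i (Finset.mem_erase.mpr ⟨hia, hi⟩)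
    · intro i hi; simp [key2 i hi]

section
variable {v : ℕ} {F : Type} [Field F] [Fintype F] [DecidableEq F]

theorem double_count (X : Finset (Fin v → F)) (V : Finset (Fin v)) (m : ℕ) :
    ∑ U ∈ V.powersetCard m, (X.filter (fun y => ∀ j ∈ U, y j = 0)).card
      = ∑ y ∈ X, (V.filter (fun j => y j = 0)).card.choose m := by
  simp_rw [Finset.card_filter _ X]
  rw [Finset.sum_comm]
  refine Finset.sum_congr rfl fun y _ => ?_
  rw [← Finset.card_filter, ← Finset.card_powersetCard]
  congr 1
  ext U
  simp only [Finset.mem_filter, Finset.mem_powersetCard, Finset.subset_iff]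
  grind

def cnt (X : Finset (Fin v → F)) (i : ℕ) (P R : Finset (Fin v)) : ℕ :=
  (X.filter (fun y => hammingNorm y = i ∧ (∀ j ∈ P, y j ≠ 0) ∧ ∀ j ∈ R, y j = 0)).card

theorem cnt_insert (X : Finset (Fin v → F)) (i : ℕ) (P R : Finset (Fin v)) (a : Fin v) :
    cnt X i (insert a P) R + cnt X i P (insert a R) = cnt X i P R := by
  unfold cnt
  rw [← Finset.card_union_of_disjoint]
  · congr 1
    ext y
    simp only [Finset.mem_union, Finset.mem_filter, Finset.mem_insert]
    by_cases h : y a = 0 <;> grind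
  · rw [Finset.disjoint_filter]
    intro y _ h h2
    exact h.2.1 a (by simp) (h2.2.2 a (by simp))

def nn (b : ℕ → ℕ → ℕ) (i : ℕ) : ℕ → ℕ → ℕ
  | 0, r => b i r
  | p+1, r => nn b i p r - nn b i p (r+1)

theorem cnt_nn (X : Finset (Fin v → F)) (t : ℕ) (b : ℕ → ℕ → ℕ)
    (hb : ∀ i (R : Finset (Fin v)), R.card ≤ t → cnt X i ∅ R = b i R.card) (i : ℕ) :
    ∀ (P R : Finset (Fin v)), Disjoint P R → P.card + R.card ≤ t →
      cnt X i P R = nn b i P.card R.card := by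
  intro P
  induction P using Finset.induction_on with
  | empty => intro R _ h; simpa [nn] using hb i R (by simpa using h)
  | insert a P ha ih =>
    intro R hd hc
    rw [Finset.card_insert_of_notMem ha] at hc ⊢
    rw [Finset.disjoint_insert_left] at hd
    have h1 := ih R hd.2 (by omega)
    have h2 := ih (insert a R) (by rw [Finset.disjoint_insert_right]; exact ⟨ha, hd.2⟩)
      (by rw [Finset.card_insert_of_notMem hd.1]; omega)
    rw [Finset.card_insert_of_notMem hd.1] at h2
    have h3 := cnt_insert X i P R a
    simp only [nn]
    omega

theorem exists_b (X : Finset (Fin v → F)) (t : ℕ)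
    (h : ∀ i (R R' : Finset (Fin v)), R.card ≤ t → R.card = R'.card → cnt X i ∅ R = cnt X i ∅ R') :
    ∃ b : ℕ → ℕ → ℕ, ∀ i (R : Finset (Fin v)), R.card ≤ t → cnt X i ∅ R = b i R.card := by
  classical
  refine ⟨fun i r => if hr : ∃ R : Finset (Fin v), R.card = r then cnt X i ∅ hr.choose else 0, ?_⟩
  intro i R hR
  have hr : ∃ R' : Finset (Fin v), R'.card = R.card := ⟨R, rfl⟩
  simp only [hr, dif_pos]
  exact h i R _ hR hr.choose_spec.symm

theorem card_zero_compl (y : Fin v → F) (R : Finset (Fin v)) :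
    (Rᶜ.filter (fun j => y j = 0)).card + (R.card + hammingNorm y)
      = v + (R.filter (fun j => y j ≠ 0)).card := by
  have h1 : (Rᶜ.filter (fun j => y j = 0)).card + (Rᶜ.filter (fun j => ¬ y j = 0)).card = Rᶜ.card :=
    Finset.card_filter_add_card_filter_not _
  have h2 : Rᶜ.card + R.card = v := by
    have := Finset.card_compl_add_card R; simpa using this
  have h3 : (R.filter (fun j => y j ≠ 0)).card + (Rᶜ.filter (fun j => ¬ y j = 0)).card
      = hammingNorm y := by
    unfold hammingNorm
    rw [← Finset.card_union_of_disjoint]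
    · congr 1; ext j; simp; tauto
    · rw [Finset.disjoint_left]; intro j; simp; tauto
  omega

/-- zero-moment of words vanishing on R -/
theorem moment (X : Finset (Fin v → F)) (R : Finset (Fin v)) (m : ℕ) (I : Finset ℕ)
    (hI : ∀ y ∈ X, (∀ j ∈ R, y j = 0) → hammingNorm y ∈ I) :
    ∑ U ∈ Rᶜ.powersetCard m, (X.filter (fun y => ∀ j ∈ R ∪ U, y j = 0)).card
      = ∑ i ∈ I, cnt X i ∅ R * (v - R.card - i).choose m := by
  have h := double_count (X.filter (fun y => ∀ j ∈ R, y j = 0)) Rᶜ m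
  simp only [Finset.filter_filter] at h
  have e : ∀ U : Finset (Fin v), X.filter (fun y => ∀ j ∈ R ∪ U, y j = 0)
      = X.filter (fun y => (∀ j ∈ R, y j = 0) ∧ ∀ j ∈ U, y j = 0) := by
    intro U; apply Finset.filter_congr; intro y _; simp only [Finset.mem_union]; grind
  simp only [e, h]
  rw [← Finset.sum_fiberwise_of_maps_to (t := I) (g := fun y => hammingNorm y)]
  · refine Finset.sum_congr rfl fun i _ => ?_
    have : ∀ y ∈ (X.filter (fun y => ∀ j ∈ R, y j = 0)).filter (fun y => hammingNorm y = i),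
        (Rᶜ.filter (fun j => y j = 0)).card.choose m = (v - R.card - i).choose m := by
      intro y hy
      simp only [Finset.mem_filter] at hy
      have h1 := card_zero_compl y R
      have h2 : R.filter (fun j => y j ≠ 0) = ∅ := by
        rw [Finset.filter_eq_empty_iff]; intro j hj; simp [hy.1.2 j hj]
      rw [h2, Finset.card_empty, hy.2] at h1
      congr 1; omega
    rw [Finset.sum_congr rfl this, Finset.sum_const, smul_eq_mul, Finset.filter_filter]
    congr 1
    unfold cnt; congr 1; apply Finset.filter_congr; intro y _; simp; tauto
  · intro y hy
    simp only [Finset.mem_filter] at hy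
    exact hI y hy.1 hy.2

theorem moment_all (X : Finset (Fin v → F)) (t : ℕ) (b : ℕ → ℕ → ℕ)
    (hb : ∀ i (R : Finset (Fin v)), R.card ≤ t → cnt X i ∅ R = b i R.card)
    (R : Finset (Fin v)) (hR : R.card ≤ t) (m : ℕ) :
    ∑ y ∈ X, (Rᶜ.filter (fun j => y j = 0)).card.choose m
      = ∑ i ∈ range (v+1), ∑ p ∈ range (R.card + 1), R.card.choose p *
          (nn b i p (R.card - p) * (v + p - (R.card + i)).choose m) := by
  rw [← Finset.sum_fiberwise_of_maps_to (t := range (v+1)) (g := fun y => hammingNorm y)]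
  · refine Finset.sum_congr rfl fun i _ => ?_
    rw [← Finset.sum_fiberwise_of_maps_to (t := R.powerset)
      (g := fun y => R.filter (fun j => y j ≠ 0))]
    · have := Finset.sum_powerset_apply_card (x := R)
        (fun p => nn b i p (R.card - p) * (v + p - (R.card + i)).choose m)
      simp only [smul_eq_mul] at this
      rw [← this]
      refine Finset.sum_congr rfl fun P hP => ?_
      rw [Finset.mem_powerset] at hP
      have e1 : ∀ y ∈ (X.filter (fun y => hammingNorm y = i)).filter
          (fun y => R.filter (fun j => y j ≠ 0) = P),
          (Rᶜ.filter (fun j => y j = 0)).card.choose m = (v + P.card - (R.card + i)).choose m := by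
        intro y hy
        simp only [Finset.mem_filter] at hy
        have h1 := card_zero_compl y R
        rw [hy.2, hy.1.2] at h1
        congr 1; omega
      rw [Finset.sum_congr rfl e1, Finset.sum_const, smul_eq_mul, Finset.filter_filter]
      congr 1
      have hc := Finset.card_sdiff_add_card_eq_card hP
      have h2 := cnt_nn X t b hb i P (R \ P) Finset.disjoint_sdiff (by omega)
      rw [show R.card - P.card = (R \ P).card by omega, ← h2]
      unfold cnt; congr 1; apply Finset.filter_congr; intro y _
      simp only [Finset.ext_iff, Finset.mem_filter, Finset.mem_sdiff]
      constructor
      · rintro ⟨h, h'⟩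
        refine ⟨h, fun j hj => ((h' j).2 hj).2, fun j hj => ?_⟩
        by_contra hne
        exact hj.2 ((h' j).1 ⟨hj.1, hne⟩)
      · rintro ⟨h, h', h''⟩
        refine ⟨h, fun j => ⟨fun hj => ?_, fun hj => ⟨hP hj, h' j hj⟩⟩⟩
        by_contra hne
        exact hj.2 (h'' j ⟨hj.1, hne⟩)
    · intro y _
      simp
  · intro y _
    have : hammingNorm y ≤ v := by simpa using hammingNorm_le_card_fintype (x := y)
    simp only [Finset.mem_range]; omega

open Classical in
/-- the finset of codewords -/
noncomputable def fs (C : Submodule F (Fin v → F)) : Finset (Fin v → F) :=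
  Finset.univ.filter (fun c => c ∈ C)

def E (S : Finset (Fin v)) : Submodule F (Fin v → F) where
  carrier := {y | ∀ j ∈ S, y j = 0}
  add_mem' := by intro a b ha hb j hj; simp [ha j hj, hb j hj]
  zero_mem' := by intro j _; rfl
  smul_mem' := by intro r a ha j hj; simp [ha j hj]

theorem finrank_E (S : Finset (Fin v)) : Module.finrank F (E (F := F) S) + S.card = v := by
  have h : E (F := F) S = LinearMap.ker (LinearMap.funLeft F F (fun j : S => (j : Fin v))) := by
    ext y
    simp only [LinearMap.mem_ker, funext_iff, LinearMap.funLeft_apply, Pi.zero_apply, Subtype.forall]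
    rfl
  have h1 := LinearMap.finrank_range_add_finrank_ker
    (LinearMap.funLeft F F (fun j : S => (j : Fin v)))
  rw [← h, LinearMap.range_eq_top.mpr
    (LinearMap.funLeft_surjective_of_injective F F _ Subtype.val_injective)] at h1
  simp at h1
  omega

theorem dual_eq (C : Submodule F (Fin v → F)) :
    dualCode (C : Set (Fin v → F))
      = LinearMap.BilinForm.orthogonal (Matrix.toBilin' (1 : Matrix (Fin v) (Fin v) F)) C := by
  ext y
  rw [LinearMap.BilinForm.mem_orthogonal_iff]
  simp only [Matrix.toBilin'_apply', Matrix.one_mulVec]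
  change (∀ c ∈ C, ∑ i, y i * c i = 0) ↔ _
  refine forall₂_congr fun c _ => ?_
  simp [dotProduct, mul_comm]

theorem finrank_dual (C : Submodule F (Fin v → F)) :
    Module.finrank F (dualCode (C : Set (Fin v → F))) + Module.finrank F C = v := by
  rw [dual_eq, LinearMap.BilinForm.finrank_orthogonal]
  · have := Submodule.finrank_le C
    simp at this ⊢; omega
  · rw [← LinearMap.BilinForm.nondegenerate_toMatrix'_iff]; simp only [LinearMap.BilinForm.toMatrix'_toBilin']
    exact Matrix.nondegenerate_of_det_ne_zero (by simp)

theorem dual_sup (C : Submodule F (Fin v → F)) (S : Finset (Fin v)) :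
    dualCode ((C ⊔ E Sᶜ : Submodule F (Fin v → F)) : Set (Fin v → F))
      = dualCode (C : Set (Fin v → F)) ⊓ E S := by
  ext y
  change (∀ c ∈ C ⊔ E Sᶜ, ∑ i, y i * c i = 0) ↔ (∀ c ∈ C, ∑ i, y i * c i = 0) ∧ ∀ j ∈ S, y j = 0
  constructor
  · intro h
    refine ⟨fun c hc => h c (Submodule.mem_sup_left hc), fun j hj => ?_⟩
    have := h (Pi.single j 1) (Submodule.mem_sup_right (by
      intro i hi
      have : i ≠ j := by rintro rfl; simp at hi; exact hi hj
      simp [this]))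
    simpa [Pi.single_apply] using this
  · rintro ⟨h1, h2⟩ c hc
    obtain ⟨a, ha, e, he, rfl⟩ := Submodule.mem_sup.mp hc
    simp only [Pi.add_apply, mul_add, Finset.sum_add_distrib, h1 a ha, zero_add]
    refine Finset.sum_eq_zero fun i _ => ?_
    by_cases hi : i ∈ S
    · simp [h2 i hi]
    · rw [he i (by simpa using hi), mul_zero]

theorem card_fs (C : Submodule F (Fin v → F)) (S : Finset (Fin v)) :
    ((fs C).filter (fun y => ∀ j ∈ S, y j = 0)).card
      = Fintype.card F ^ Module.finrank F (C ⊓ E S : Submodule F (Fin v → F)) := by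
  classical
  rw [← Nat.card_eq_fintype_card, ← Module.natCard_eq_pow_finrank,
    Nat.card_eq_fintype_card, Fintype.card_subtype]
  congr 1
  ext y; simp only [fs, Finset.mem_filter, Finset.mem_univ, true_and, Submodule.mem_inf]; rfl

theorem dual_count (C : Submodule F (Fin v → F)) (S : Finset (Fin v)) :
    ((fs (dualCode (C : Set (Fin v → F)))).filter (fun y => ∀ j ∈ S, y j = 0)).card
      * Fintype.card F ^ (Module.finrank F C + S.card)
      = Fintype.card F ^ v * ((fs C).filter (fun y => ∀ j ∈ Sᶜ, y j = 0)).card := by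
  rw [card_fs, card_fs, ← pow_add, ← pow_add, ← dual_sup]
  congr 1
  have h1 := finrank_dual (C ⊔ E Sᶜ)
  have h2 := Submodule.finrank_sup_add_finrank_inf_eq C (E Sᶜ)
  have h3 := finrank_E (F := F) Sᶜ
  have h4 := Finset.card_compl_add_card S
  simp only [Fintype.card_fin] at h4
  omega


theorem fiber (X : Submodule F (Fin v → F)) (δ i : ℕ)
    (hδ : ∀ c ∈ X, c ≠ 0 → δ ≤ hammingNorm c) (hi : 0 < i)
    (hw : i - (i + Fintype.card F - 2) / (Fintype.card F - 1) < δ)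
    (c c' : Fin v → F) (hc : c ∈ X) (hc' : c' ∈ X) (hn : hammingNorm c = i)
    (hs : ∀ j, c j ≠ 0 ↔ c' j ≠ 0) : ∃ a : Fˣ, a • c = c' := by
  classical
  have hq : 1 < Fintype.card F := Fintype.one_lt_card
  set S := Finset.univ.filter (fun j => c j ≠ 0) with hS
  have hSc : S.card = i := hn
  have hmaps : ∀ j ∈ S, (fun j => if h : c' j / c j = 0 then (1 : Fˣ) else Units.mk0 _ h) j
      ∈ (Finset.univ : Finset Fˣ) := fun _ _ => Finset.mem_univ _
  have hcu : Fintype.card Fˣ = Fintype.card F - 1 := by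
    rw [← Fintype.card_units]
  obtain ⟨k, hk⟩ : ∃ k, k = (i - 1) / (Fintype.card F - 1) := ⟨_, rfl⟩
  have hk1 : (i + Fintype.card F - 2) / (Fintype.card F - 1) = k + 1 := by
    rw [hk, show i + Fintype.card F - 2 = (i - 1) + (Fintype.card F - 1) by omega,
      Nat.add_div_right _ (by omega)]
  have hlt : (Finset.univ : Finset Fˣ).card * k < S.card := by
    rw [Finset.card_univ, hcu, hSc, hk]
    have := Nat.mul_div_le (i - 1) (Fintype.card F - 1)
    omega
  obtain ⟨a, -, ha⟩ := Finset.exists_lt_card_fiber_of_mul_lt_card_of_maps_to hmaps hlt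
  refine ⟨a, ?_⟩
  by_contra hne
  have hne' : a • c - c' ≠ 0 := sub_ne_zero.mpr hne
  have h1 := hδ (a • c - c') (X.sub_mem (X.smul_mem (a : F) hc) hc') hne'
  have h2 : hammingNorm (a • c - c') + (S.filter (fun j =>
      (if h : c' j / c j = 0 then (1 : Fˣ) else Units.mk0 _ h) = a)).card ≤ S.card := by
    unfold hammingNorm
    rw [← Finset.card_union_of_disjoint]
    · apply Finset.card_le_card
      intro j hj
      rw [Finset.mem_union] at hj
      rcases hj with hj | hj
      · simp only [hS, Finset.mem_filter, Finset.mem_univ, true_and] at hj ⊢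
        intro h0
        have h0' : c' j = 0 := by
          by_contra h; exact ((hs j).2 h) h0
        apply hj
        simp [h0, h0']
      · exact (Finset.mem_filter.mp hj).1
    · rw [Finset.disjoint_left]
      intro j hj hj2
      simp only [hS, Finset.mem_filter, Finset.mem_univ, true_and] at hj hj2
      apply hj
      have h3 := (hs j).1 hj2.1
      have h4 : c' j / c j ≠ 0 := div_ne_zero h3 hj2.1
      have h5 := hj2.2
      rw [dif_neg h4] at h5
      rw [← h5]
      simp [Units.smul_def, div_mul_cancel₀ _ hj2.1]
  omega

theorem supports (X : Submodule F (Fin v → F)) (δ i : ℕ)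
    (hδ : ∀ c ∈ X, c ≠ 0 → δ ≤ hammingNorm c) (hi : 0 < i)
    (hw : i - (i + Fintype.card F - 2) / (Fintype.card F - 1) < δ) (T : Finset (Fin v)) :
    {S : Set (Fin v) | (∃ c ∈ X, hammingNorm c = i ∧ S = {j | c j ≠ 0}) ∧ ↑T ⊆ S}.ncard
      * (Fintype.card F - 1) = cnt (fs X) i T ∅ := by
  classical
  have hset : {S : Set (Fin v) | (∃ c ∈ X, hammingNorm c = i ∧ S = {j | c j ≠ 0}) ∧ ↑T ⊆ S}
      = (((fs X).filter (fun y => hammingNorm y = i ∧ (∀ j ∈ T, y j ≠ 0) ∧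
          ∀ j ∈ (∅ : Finset (Fin v)), y j = 0)).image
          (fun c => {j | c j ≠ 0}) : Finset (Set (Fin v))) := by
    ext S
    simp only [fs, Set.mem_setOf_eq, Finset.coe_image, Set.mem_image, Finset.coe_filter,
      Finset.mem_filter, Finset.mem_univ, true_and]
    constructor
    · rintro ⟨⟨c, hc, hn, rfl⟩, hT⟩
      exact ⟨c, ⟨hc, hn, fun j hj => hT hj, by simp⟩, rfl⟩
    · rintro ⟨c, ⟨hc, hn, hT, -⟩, rfl⟩
      exact ⟨⟨c, hc, hn, rfl⟩, fun j hj => hT j hj⟩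
  rw [hset, Set.ncard_coe_finset]
  unfold cnt
  rw [Finset.card_eq_sum_card_image (fun c : Fin v → F => {j | c j ≠ 0})
    ((fs X).filter (fun y => hammingNorm y = i ∧ (∀ j ∈ T, y j ≠ 0) ∧
          ∀ j ∈ (∅ : Finset (Fin v)), y j = 0))]
  rw [Finset.sum_const_nat]
  intro S hS
  obtain ⟨c, hc, rfl⟩ := Finset.mem_image.mp hS
  simp only [fs, Finset.mem_filter, Finset.mem_univ, true_and] at hc
  obtain ⟨hcX, hn, hT, -⟩ := hc
  rw [← Fintype.card_units, ← Finset.card_univ, ← Finset.card_image_of_injective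
    (f := fun a : Fˣ => a • c)]
  · congr 1
    ext c'
    simp only [fs, Finset.mem_filter, Finset.mem_univ, true_and, Finset.mem_image]
    constructor
    · rintro ⟨⟨hc', hn', -⟩, hs⟩
      refine fiber X δ i hδ hi hw c c' hcX hc' hn fun j => ?_
      have := Set.ext_iff.mp hs j
      exact this.symm
    · rintro ⟨a, rfl⟩
      refine ⟨⟨X.smul_mem (a : F) hcX, ?_, ?_, by simp⟩, ?_⟩
      · rw [← hn]; simp [hammingNorm, Units.smul_def]
      · intro j hj; simp [hT j hj, Units.smul_def]
      · ext j; simp [Units.smul_def]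
  · intro a b hab
    have hne : c ≠ 0 := by rintro rfl; simp at hn; omega
    obtain ⟨j, hj⟩ := Function.ne_iff.mp hne
    have := congrFun hab j
    simp only [Pi.smul_apply, Units.smul_def, smul_eq_mul] at this
    exact Units.ext (mul_right_cancel₀ hj this)

theorem inv_dual (C : Submodule F (Fin v → F)) (d t : ℕ) (I : Finset ℕ)
    (hmin : ∀ c ∈ C, c ≠ 0 → d ≤ hammingNorm c) (htd : t < d)
    (hI : ∀ y ∈ dualCode (C : Set (Fin v → F)), hammingNorm y ≤ v - t → hammingNorm y ∈ I)
    (hIv : ∀ i ∈ I, i ≤ v - t) (hcard : I.card ≤ d - t)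
    (R R' : Finset (Fin v)) (hR : R.card = t) (hR' : R'.card = t) (i : ℕ) :
    cnt (fs (dualCode (C : Set (Fin v → F)))) i ∅ R
      = cnt (fs (dualCode (C : Set (Fin v → F)))) i ∅ R' := by
  have hq : 1 < Fintype.card F := Fintype.one_lt_card
  have hIR : ∀ Q : Finset (Fin v), Q.card = t → ∀ y ∈ fs (dualCode (C : Set (Fin v → F))),
      (∀ j ∈ Q, y j = 0) → hammingNorm y ∈ I := by
    intro Q hQ y hy h
    apply hI y (by simpa [fs] using hy)
    have h1 := card_zero_compl y Q
    have h2 : Q.filter (fun j => y j ≠ 0) = ∅ := by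
      rw [Finset.filter_eq_empty_iff]; intro j hj; simp [h j hj]
    rw [h2, Finset.card_empty] at h1
    omega
  have hcnt0 : ∀ Q : Finset (Fin v), Q.card = t → i ∉ I →
      cnt (fs (dualCode (C : Set (Fin v → F)))) i ∅ Q = 0 := by
    intro Q hQ hi
    unfold cnt
    rw [Finset.card_eq_zero, Finset.filter_eq_empty_iff]
    rintro y hy ⟨rfl, -, h⟩
    exact hi (hIR Q hQ y hy h)
  by_cases hi : i ∈ I
  swap
  · rw [hcnt0 R hR hi, hcnt0 R' hR' hi]
  have hone : ∀ S : Finset (Fin v), S.card < d →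
      ((fs C).filter (fun y => ∀ j ∈ Sᶜ, y j = 0)).card = 1 := by
    intro S hS
    rw [Finset.card_eq_one]
    refine ⟨0, ?_⟩
    ext y
    simp only [fs, Finset.mem_filter, Finset.mem_univ, true_and, Finset.mem_singleton]
    constructor
    · rintro ⟨hy, h⟩
      by_contra hne
      have h1 := hmin y hy hne
      have h2 : hammingNorm y ≤ S.card := by
        apply Finset.card_le_card
        intro j hj
        by_contra hjS
        exact (Finset.mem_filter.mp hj).2 (h j (by simpa using hjS))
      omega
    · rintro rfl
      exact ⟨C.zero_mem, fun _ _ => rfl⟩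
  have hmom : ∀ Q : Finset (Fin v), Q.card = t → ∀ m < d - t,
      (∑ i ∈ I, cnt (fs (dualCode (C : Set (Fin v → F)))) i ∅ Q * (v - t - i).choose m)
        * Fintype.card F ^ (Module.finrank F C + (t + m)) = (v - t).choose m * Fintype.card F ^ v := by
    intro Q hQ m hm
    have h := moment (fs (dualCode (C : Set (Fin v → F)))) Q m I (hIR Q hQ)
    rw [hQ] at h
    rw [← h, Finset.sum_mul]
    rw [Finset.sum_const_nat (m := Fintype.card F ^ v), Finset.card_powersetCard,
      Finset.card_compl, hQ, Fintype.card_fin]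
    intro U hU
    rw [Finset.mem_powersetCard] at hU
    have hcu : (Q ∪ U).card = t + m := by
      rw [Finset.card_union_of_disjoint, hQ, hU.2]
      rw [Finset.disjoint_left]
      intro j hj hjU
      have := hU.1 hjU
      simp at this
      exact this hj
    have := dual_count C (Q ∪ U)
    rw [hcu, hone (Q ∪ U) (by omega), mul_one] at this
    exact this
  have := uniq (d - t) I (fun i => v - t - i)
    (fun i => (cnt (fs (dualCode (C : Set (Fin v → F)))) i ∅ R : ℤ)
      - cnt (fs (dualCode (C : Set (Fin v → F)))) i ∅ R') ?_ hcard ?_ i hi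
  · omega
  · intro a ha b hb hab
    have := hIv a ha
    have := hIv b hb
    simp only at hab
    omega
  · intro m hm
    have h1 := hmom R hR m hm
    rw [← hmom R' hR' m hm] at h1
    have h2 := Nat.eq_of_mul_eq_mul_right (by positivity) h1
    simp only [sub_mul, Finset.sum_sub_distrib]
    rw [sub_eq_zero]
    exact_mod_cast h2

theorem inv_code (C : Submodule F (Fin v → F)) (t : ℕ) (b : ℕ → ℕ → ℕ)
    (hb : ∀ i (R : Finset (Fin v)), R.card ≤ t →
      cnt (fs (dualCode (C : Set (Fin v → F)))) i ∅ R = b i R.card)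
    (R R' : Finset (Fin v)) (hR : R.card ≤ t) (hRR' : R.card = R'.card) (i : ℕ) :
    cnt (fs C) i ∅ R = cnt (fs C) i ∅ R' := by
  have hq : 1 < Fintype.card F := Fintype.one_lt_card
  have hle : ∀ Q : Finset (Fin v), ∀ y : Fin v → F, (∀ j ∈ Q, y j = 0) →
      hammingNorm y ∈ Finset.range (v - Q.card + 1) := by
    intro Q y h
    have h1 := card_zero_compl y Q
    have h2 : Q.filter (fun j => y j ≠ 0) = ∅ := by
      rw [Finset.filter_eq_empty_iff]; intro j hj; simp [h j hj]
    rw [h2, Finset.card_empty] at h1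
    rw [Finset.mem_range]
    omega
  have hcnt0 : ∀ Q : Finset (Fin v), i ∉ Finset.range (v - Q.card + 1) →
      cnt (fs C) i ∅ Q = 0 := by
    intro Q hi
    unfold cnt
    rw [Finset.card_eq_zero, Finset.filter_eq_empty_iff]
    rintro y hy ⟨rfl, -, h⟩
    exact hi (hle Q y h)
  by_cases hi : i ∈ Finset.range (v - R.card + 1)
  swap
  · rw [hcnt0 R hi, hcnt0 R' (hRR' ▸ hi)]
  have hmom : ∀ Q : Finset (Fin v), Q.card = R.card → ∀ m ≤ v - R.card,
      Fintype.card F ^ v * (∑ i ∈ Finset.range (v - R.card + 1),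
          cnt (fs C) i ∅ Q * (v - R.card - i).choose m)
        = (∑ y ∈ fs (dualCode (C : Set (Fin v → F))),
            (Qᶜ.filter (fun j => y j = 0)).card.choose (v - R.card - m))
          * Fintype.card F ^ (Module.finrank F C + (v - R.card - m)) := by
    intro Q hQ m hm
    have h := moment (fs C) Q m (Finset.range (v - R.card + 1)) (fun y _ h => hQ ▸ hle Q y h)
    rw [hQ] at h
    rw [← h, ← double_count, Finset.mul_sum, Finset.sum_mul]
    have hQc : Qᶜ.card = v - R.card := by rw [Finset.card_compl, hQ, Fintype.card_fin]
    refine Finset.sum_bij' (fun U _ => Qᶜ \ U) (fun U _ => Qᶜ \ U) ?_ ?_ ?_ ?_ ?_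
    · intro U hU
      rw [Finset.mem_powersetCard] at hU ⊢
      refine ⟨Finset.sdiff_subset, ?_⟩
      rw [Finset.card_sdiff_of_subset hU.1, hQc, hU.2]
    · intro U hU
      rw [Finset.mem_powersetCard] at hU ⊢
      refine ⟨Finset.sdiff_subset, ?_⟩
      rw [Finset.card_sdiff_of_subset hU.1, hQc, hU.2]; omega
    · intro U hU
      rw [Finset.mem_powersetCard] at hU
      exact Finset.sdiff_sdiff_eq_self hU.1
    · intro U hU
      rw [Finset.mem_powersetCard] at hU
      exact Finset.sdiff_sdiff_eq_self hU.1
    · intro U hU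
      rw [Finset.mem_powersetCard] at hU
      have hd := dual_count C (Qᶜ \ U)
      have hc : (Qᶜ \ U)ᶜ = Q ∪ U := by
        ext j; simp only [Finset.mem_compl, Finset.mem_sdiff, Finset.mem_union]; tauto
      rw [hc, Finset.card_sdiff_of_subset hU.1, hQc, hU.2] at hd
      exact hd.symm
  have := uniq (v - R.card + 1) (Finset.range (v - R.card + 1)) (fun i => v - R.card - i)
    (fun i => (cnt (fs C) i ∅ R : ℤ) - cnt (fs C) i ∅ R') ?_ (by simp) ?_ i hi
  · omega
  · intro a ha b hb hab
    simp only [Finset.coe_range, Set.mem_Iio] at ha hb hab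
    omega
  · intro m hm
    have h1 := hmom R rfl m (by omega)
    have h2 := hmom R' hRR'.symm m (by omega)
    rw [moment_all _ t b hb R hR] at h1
    rw [moment_all _ t b hb R' (by omega), ← hRR', ← h1] at h2
    have h3 := Nat.eq_of_mul_eq_mul_left (by positivity) h2
    simp only [sub_mul, Finset.sum_sub_distrib]
    rw [sub_eq_zero]
    exact_mod_cast h3.symm

/-- designs from constant counts -/
theorem design (X : Submodule F (Fin v → F)) (δ i t : ℕ)
    (hδ : ∀ c ∈ X, c ≠ 0 → δ ≤ hammingNorm c) (hi : 0 < i)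
    (hw : i - (i + Fintype.card F - 2) / (Fintype.card F - 1) < δ)
    (b : ℕ → ℕ → ℕ)
    (hb : ∀ i (R : Finset (Fin v)), R.card ≤ t → cnt (fs X) i ∅ R = b i R.card) :
    ∃ lam, ∀ T : Finset (Fin v), T.card = t →
        {S : Set (Fin v) |
          (∃ c ∈ X, hammingNorm c = i ∧ S = {j | c j ≠ 0}) ∧ ↑T ⊆ S}.ncard = lam := by
  refine ⟨nn b i t 0 / (Fintype.card F - 1), fun T hT => ?_⟩
  have hq : 1 < Fintype.card F := Fintype.one_lt_card
  have h1 := supports X δ i hδ hi hw T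
  have h2 := cnt_nn (fs X) t b hb i T ∅ (by simp) (by simp [hT])
  rw [h2, hT, Finset.card_empty] at h1
  rw [← h1, Nat.mul_div_cancel _ (by omega)]

theorem mono_w (q : ℕ) (hq : 1 < q) (i w : ℕ) (h : i ≤ w) :
    i - (i + q - 2) / (q - 1) ≤ w - (w + q - 2) / (q - 1) := by
  induction w, h using Nat.le_induction with
  | base => exact le_rfl
  | succ w _ ih =>
    refine ih.trans ?_
    have h1 : (w + 1 + q - 2) / (q - 1) ≤ (w + q - 2) / (q - 1) + 1 := by
      rw [← Nat.add_div_right _ (by omega)]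
      exact Nat.div_le_div_right (by omega)
    omega

theorem min_wt (X : Submodule F (Fin v → F)) (A : ℕ → ℕ) (d : ℕ)
    (hA : ∀ i, A i = {c : Fin v → F | c ∈ X ∧ hammingNorm c = i}.ncard)
    (hd : IsLeast {i | 0 < i ∧ A i ≠ 0} d) : ∀ c ∈ X, c ≠ 0 → d ≤ hammingNorm c := by
  intro c hc hne
  refine hd.2 ⟨hammingNorm_pos_iff.mpr hne, ?_⟩
  rw [hA]
  exact Set.ncard_ne_zero_of_mem (a := c) ⟨hc, rfl⟩ (Set.toFinite _)

end
end AM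

/-- **Assmus–Mattson theorem.** Let `C` be a linear code of length `v`
over `F_q` with minimum nonzero weight `d`, dual minimum nonzero weight `d^⊥`, and let
`w` (resp. `w^⊥`) be the largest integer `≤ v` with `w − ⌊(w+q−2)/(q−1)⌋ < d` (resp.
`< d^⊥`). Fix `0 < t < d` and let `s` be the number of `i` with `0 ≤ i ≤ v − t` and
`A_i^⊥ ≠ 0`. If `s ≤ d − t`, then the supports of the weight-`i` codewords of `C` form a
`t`-design for `A_i ≠ 0`, `d ≤ i ≤ w`, and the supports of the weight-`i` codewords of
`C^⊥` form a `t`-design for `A_i^⊥ ≠ 0`, `d^⊥ ≤ i ≤ min(v − t, w^⊥)`. -/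
theorem assmus_mattson
    (q v d dperp w wperp t s : ℕ)
    (hq : ∃ p r : ℕ, p.Prime ∧ 0 < r ∧ q = p ^ r)
    (F : Type) [Field F] [Fintype F] [DecidableEq F] (hF : Fintype.card F = q)
    (C : Submodule F (Fin v → F))
    (A Adual : ℕ → ℕ)
    (hA : ∀ i, A i = {c : Fin v → F | c ∈ C ∧ hammingNorm c = i}.ncard)
    (hAdual : ∀ i, Adual i =
      {y : Fin v → F | y ∈ dualCode (C : Set (Fin v → F)) ∧ hammingNorm y = i}.ncard)
    (hd : IsLeast {i | 0 < i ∧ A i ≠ 0} d)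
    (hdperp : IsLeast {i | 0 < i ∧ Adual i ≠ 0} dperp)
    (hw : IsGreatest {x | x ≤ v ∧ x - (x + q - 2) / (q - 1) < d} w)
    (hwperp : IsGreatest {x | x ≤ v ∧ x - (x + q - 2) / (q - 1) < dperp} wperp)
    (ht : 0 < t) (htd : t < d)
    (hs : s = ((Finset.range (v - t + 1)).filter (fun i => Adual i ≠ 0)).card)
    (hsd : s ≤ d - t) :
    (∀ i, A i ≠ 0 → d ≤ i → i ≤ w →
      ∃ lam, ∀ T : Finset (Fin v), T.card = t →
        {S : Set (Fin v) |
          (∃ c ∈ C, hammingNorm c = i ∧ S = {j | c j ≠ 0}) ∧ ↑T ⊆ S}.ncard = lam) ∧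
    (∀ i, Adual i ≠ 0 → dperp ≤ i → i ≤ min (v - t) wperp →
      ∃ lam, ∀ T : Finset (Fin v), T.card = t →
        {S : Set (Fin v) |
          (∃ y ∈ dualCode (C : Set (Fin v → F)), hammingNorm y = i ∧ S = {j | y j ≠ 0}) ∧
          ↑T ⊆ S}.ncard = lam) := by
  subst hF
  have hq1 : 1 < Fintype.card F := Fintype.one_lt_card
  have hmin := AM.min_wt C A d hA hd
  have hmin' := AM.min_wt (dualCode (C : Set (Fin v → F))) Adual dperp hAdual hdperp
  have hdv : d ≤ v := by
    obtain ⟨c, hc⟩ := Set.nonempty_of_ncard_ne_zero (hA d ▸ hd.1.2)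
    rw [← hc.2]
    simpa using hammingNorm_le_card_fintype (x := c)
  have hinv : ∀ i (R R' : Finset (Fin v)), R.card ≤ t → R.card = R'.card →
      AM.cnt (AM.fs (dualCode (C : Set (Fin v → F)))) i ∅ R
        = AM.cnt (AM.fs (dualCode (C : Set (Fin v → F)))) i ∅ R' := by
    intro i R R' hR hRR'
    refine AM.inv_dual C d R.card
      ((Finset.range (v - R.card + 1)).filter (fun i => Adual i ≠ 0)) hmin (by omega) ?_ ?_ ?_
      R R' rfl hRR'.symm i
    · intro y hy hle
      rw [Finset.mem_filter, Finset.mem_range]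
      refine ⟨by omega, ?_⟩
      rw [hAdual]
      exact Set.ncard_ne_zero_of_mem (a := y) ⟨hy, rfl⟩ (Set.toFinite _)
    · intro j hj
      rw [Finset.mem_filter, Finset.mem_range] at hj
      omega
    · have hsub : (Finset.range (v - R.card + 1)).filter (fun i => Adual i ≠ 0)
          ⊆ (Finset.range (v - t + 1)).filter (fun i => Adual i ≠ 0)
            ∪ Finset.Ico (v - t + 1) (v - R.card + 1) := by
        intro j hj
        simp only [Finset.mem_union, Finset.mem_filter, Finset.mem_range, Finset.mem_Ico] at hj ⊢
        by_cases h : j < v - t + 1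
        · exact Or.inl ⟨h, hj.2⟩
        · exact Or.inr ⟨by omega, hj.1⟩
      have h1 := (Finset.card_le_card hsub).trans (Finset.card_union_le _ _)
      rw [← hs, Nat.card_Ico] at h1
      omega
  obtain ⟨b, hb⟩ := AM.exists_b _ t hinv
  obtain ⟨b', hb'⟩ := AM.exists_b (AM.fs C) t
    (fun i R R' hR hRR' => AM.inv_code C t b hb R R' hR hRR' i)
  constructor
  · intro i _ hdi hiw
    exact AM.design C d i t hmin (by omega)
      (lt_of_le_of_lt (AM.mono_w _ hq1 i w hiw) hw.1.2) b' hb'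
  · intro i _ hdi hiw
    have := hdperp.1.1
    exact AM.design (dualCode (C : Set (Fin v → F))) dperp i t hmin' (by omega)
      (lt_of_le_of_lt (AM.mono_w _ hq1 i wperp (by omega)) hwperp.1.2) b hb
end

section
/- Let C be a binary linear code of length n, dimension κ > 1, and minimum nonzero Hamming weight d, and let t < d be a positive integer. Suppose that for each weight w > 0 the supports of the codewords of Hamming weight w in C form a t-design. Then for each nonzero weight, the supports of the codewords of that weight in the dual code C^⊥ also form a t-design. -/
open Polynomial Finset

/-- sign character -/
def chi (x : ZMod 2) : ℤ := if x = 0 then 1 else -1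

lemma chi_add (a b : ZMod 2) : chi (a + b) = chi a * chi b := by
  revert a b; decide

lemma chi_sum {ι : Type*} (s : Finset ι) (f : ι → ZMod 2) :
    chi (∑ i ∈ s, f i) = ∏ i ∈ s, chi (f i) := by
  classical
  induction s using Finset.induction_on with
  | empty => simp [chi]
  | insert a s ha ih => rw [Finset.sum_insert ha, Finset.prod_insert ha, chi_add, ih]

/-- support -/
def supp2 {n : ℕ} (c : Fin n → ZMod 2) : Finset (Fin n) := Finset.univ.filter fun i => c i ≠ 0

lemma card_supp2 {n : ℕ} (c : Fin n → ZMod 2) : (supp2 c).card = hammingNorm c := rfl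

open Classical in
lemma orth {n : ℕ} (C : Submodule (ZMod 2) (Fin n → ZMod 2)) (y : Fin n → ZMod 2) :
    ∑ c ∈ univ.filter (fun c => c ∈ C), chi (∑ i, y i * c i) =
      if y ∈ dualCode (C : Set (Fin n → ZMod 2)) then
        ((univ.filter (fun c : Fin n → ZMod 2 => c ∈ C)).card : ℤ) else 0 := by
  split_ifs with h
  · rw [Finset.sum_congr rfl (g := fun _ => (1 : ℤ))]
    · simp
    · intro c hc
      have := h c (by simpa using hc)
      rw [this]; rfl
  · have : ∃ c0 ∈ C, ∑ i, y i * c0 i ≠ 0 := by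
      by_contra! hh
      exact h hh
    obtain ⟨c0, hc0, hne⟩ := this
    have key : ∑ c ∈ univ.filter (fun c => c ∈ C), chi (∑ i, y i * c i) =
        ∑ c ∈ univ.filter (fun c => c ∈ C), - chi (∑ i, y i * c i) := by
      refine Finset.sum_bij (fun c _ => c + c0) ?_ ?_ ?_ ?_
      · intro c hc
        simp only [Finset.mem_filter, Finset.mem_univ, true_and] at hc ⊢
        exact C.add_mem hc hc0
      · intro a _ b _ hab
        exact add_right_cancel hab
      · intro b hb
        simp only [Finset.mem_filter, Finset.mem_univ, true_and] at hb
        exact ⟨b - c0, by simpa using C.sub_mem hb hc0, by simp⟩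
      · intro c hc
        have : ∑ i, y i * (c + c0) i = ∑ i, y i * c i + ∑ i, y i * c0 i := by
          simp [mul_add, Finset.sum_add_distrib]
        rw [this, chi_add]
        have h1 : chi (∑ i, y i * c0 i) = -1 := by simp [chi, hne]
        rw [h1]; ring
    rw [Finset.sum_neg_distrib] at key
    linarith

/-- The local factor. -/
noncomputable def hpoly (n t w j : ℕ) : ℤ[X] :=
  (-X) ^ j * X ^ (t - j) * (1 - X) ^ (w - j) * (1 + X) ^ (n - t - (w - j))

open Classical in
lemma local_sum {n : ℕ} (c : Fin n → ZMod 2) (T : Finset (Fin n)) :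
    ∑ y : Fin n → ZMod 2, (if T ⊆ supp2 y then (X : ℤ[X]) ^ (hammingNorm y) else 0) *
        C (chi (∑ i, y i * c i)) = hpoly n T.card (hammingNorm c) (T ∩ supp2 c).card := by
  have h1 : ∀ y : Fin n → ZMod 2,
      (if T ⊆ supp2 y then (X : ℤ[X]) ^ (hammingNorm y) else 0) * C (chi (∑ i, y i * c i)) =
      ∏ i, ((if i ∈ T ∧ y i = 0 then 0 else 1) * (if y i ≠ 0 then (X : ℤ[X]) else 1) *
        C (chi (y i * c i))) := by
    intro y
    rw [Finset.prod_mul_distrib, Finset.prod_mul_distrib, chi_sum, map_prod]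
    congr 1
    have hX : ∏ i, (if y i ≠ 0 then (X : ℤ[X]) else 1) = X ^ (supp2 y).card := by
      rw [Finset.prod_ite, Finset.prod_const, Finset.prod_const_one, mul_one]
      rfl
    rw [hX, ← card_supp2]
    split_ifs with h
    · rw [Finset.prod_eq_one, one_mul]
      intro i _
      rw [if_neg]
      rintro ⟨hi, h0⟩
      have := h hi
      simp [supp2, h0] at this
    · obtain ⟨i, hi, hi2⟩ := Finset.not_subset.mp h
      rw [Finset.prod_eq_zero (Finset.mem_univ i), zero_mul]
      rw [if_pos]
      exact ⟨hi, by simpa [supp2] using hi2⟩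
  rw [Finset.sum_congr rfl fun y _ => h1 y]
  have h2 := Finset.prod_univ_sum (fun _ : Fin n => (univ : Finset (ZMod 2)))
    (fun i v => ((if i ∈ T ∧ v = 0 then 0 else 1) * (if v ≠ 0 then (X : ℤ[X]) else 1) *
        C (chi (v * c i))))
  rw [Fintype.piFinset_univ] at h2
  rw [← h2]
  have h3 : ∀ i : Fin n, ∑ v : ZMod 2, ((if i ∈ T ∧ v = 0 then 0 else 1) *
      (if v ≠ 0 then (X : ℤ[X]) else 1) * C (chi (v * c i))) =
      if i ∈ T then (if i ∈ supp2 c then -X else X) else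
        (if i ∈ supp2 c then 1 - X else 1 + X) := by
    intro i
    have : ∀ f : ZMod 2 → ℤ[X], ∑ v, f v = f 0 + f 1 := fun f => Fin.sum_univ_two f
    rw [this]
    by_cases hT : i ∈ T <;> by_cases hc : c i = 0 <;> simp [hT, hc, supp2, chi] <;> ring
  rw [Finset.prod_congr rfl fun i _ => h3 i, Finset.prod_ite, Finset.prod_ite, Finset.prod_ite]
  simp only [Finset.prod_const]
  have e1 : #{x ∈ ({x | x ∈ T} : Finset (Fin n)) | x ∈ supp2 c} = (T ∩ supp2 c).card := by
    congr 1; ext; simp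
  have e2 : #{x ∈ ({x | x ∈ T} : Finset (Fin n)) | x ∉ supp2 c} =
      T.card - (T ∩ supp2 c).card := by
    have := Finset.card_sdiff_add_card_inter T (supp2 c)
    have h : ({x ∈ ({x | x ∈ T} : Finset (Fin n)) | x ∉ supp2 c}) = T \ supp2 c := by ext; simp
    rw [h]; omega
  have e3 : #{x ∈ ({x | x ∉ T} : Finset (Fin n)) | x ∈ supp2 c} =
      hammingNorm c - (T ∩ supp2 c).card := by
    have := Finset.card_sdiff_add_card_inter (supp2 c) T
    have h : ({x ∈ ({x | x ∉ T} : Finset (Fin n)) | x ∈ supp2 c}) = supp2 c \ T := by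
      ext; simp [and_comm]
    rw [h, Finset.inter_comm, ← card_supp2]; omega
  have e4 : #{x ∈ ({x | x ∉ T} : Finset (Fin n)) | x ∉ supp2 c} =
      n - T.card - (hammingNorm c - (T ∩ supp2 c).card) := by
    have := Finset.card_filter_add_card_filter_not
      (s := ({x | x ∉ T} : Finset (Fin n))) (fun x => x ∈ supp2 c)
    rw [e3] at this
    have h : ({x | x ∉ T} : Finset (Fin n)) = Tᶜ := by ext; simp
    have h' : #({x | x ∉ T} : Finset (Fin n)) = n - T.card := by
      rw [h, Finset.card_compl, Fintype.card_fin]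
    omega
  rw [e1, e2, e3, e4, hpoly]
  ring

open Classical in
lemma macw {n : ℕ} (D : Submodule (ZMod 2) (Fin n → ZMod 2)) (T : Finset (Fin n)) :
    C ((univ.filter (fun c : Fin n → ZMod 2 => c ∈ D)).card : ℤ) *
      ∑ y ∈ univ.filter (fun y => y ∈ dualCode (D : Set (Fin n → ZMod 2)) ∧ T ⊆ supp2 y),
        (X : ℤ[X]) ^ (hammingNorm y) =
    ∑ c ∈ univ.filter (fun c => c ∈ D),
      hpoly n T.card (hammingNorm c) (T ∩ supp2 c).card := by
  rw [Finset.sum_congr rfl fun c _ => (local_sum c T).symm, Finset.sum_comm]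
  rw [Finset.sum_filter, Finset.mul_sum]
  refine Finset.sum_congr rfl fun y _ => ?_
  rw [← Finset.mul_sum, ← map_sum, orth]
  by_cases h1 : y ∈ dualCode (D : Set (Fin n → ZMod 2)) <;> by_cases h2 : T ⊆ supp2 y <;>
    simp [h1, h2, mul_comm]

lemma newton {M : Type*} [AddCommGroup M] (f : ℕ → M) (j t : ℕ) (h : j ≤ t) :
    f j = ∑ k ∈ range (t + 1), j.choose k • ((fwdDiff 1)^[k] f 0) := by
  have := shift_eq_sum_fwdDiff_iter (1 : ℕ) f j 0
  simp only [smul_eq_mul, mul_one, zero_add] at this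
  rw [this]
  refine Finset.sum_subset (by intro x; simp; omega) ?_
  intro x _ hx
  simp at hx
  rw [Nat.choose_eq_zero_of_lt (by omega), zero_smul]

/-- words of `W` whose support contains S -/
def cnt {n : ℕ} (W : Finset (Fin n → ZMod 2)) (S : Finset (Fin n)) : ℕ :=
  (W.filter fun c => S ⊆ supp2 c).card

lemma count_superset {α : Type*} [DecidableEq α] (S U : Finset α) (t : ℕ)
    (hS : S.card ≤ t) (h : S ⊆ U) :
    #{T ∈ powersetCard t U | S ⊆ T} = (U.card - S.card).choose (t - S.card) := by
  rw [← Finset.card_sdiff_of_subset h, ← Finset.card_powersetCard]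
  refine Finset.card_bij' (fun T _ => T \ S) (fun T _ => T ∪ S) ?_ ?_ ?_ ?_
  · intro T hT
    simp only [Finset.mem_filter, Finset.mem_powersetCard] at hT ⊢
    obtain ⟨⟨h1, h2⟩, h3⟩ := hT
    exact ⟨Finset.sdiff_subset_sdiff h1 le_rfl, by rw [Finset.card_sdiff_of_subset h3, h2]⟩
  · intro T hT
    simp only [Finset.mem_filter, Finset.mem_powersetCard] at hT ⊢
    obtain ⟨h1, h2⟩ := hT
    refine ⟨⟨Finset.union_subset (h1.trans Finset.sdiff_subset) h, ?_⟩, Finset.subset_union_right⟩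
    rw [Finset.card_union_of_disjoint, h2]
    · omega
    · exact Finset.disjoint_of_subset_left h1 Finset.sdiff_disjoint
  · intro T hT
    simp only [Finset.mem_filter] at hT
    exact Finset.sdiff_union_of_subset hT.2
  · intro T hT
    simp only [Finset.mem_powersetCard] at hT
    exact Finset.union_sdiff_cancel_right
      (Finset.disjoint_of_subset_left hT.1 Finset.sdiff_disjoint)

lemma cnt_up {n t w : ℕ} (W : Finset (Fin n → ZMod 2)) (hW : ∀ c ∈ W, hammingNorm c = w)
    (S : Finset (Fin n)) (hS : S.card ≤ t) :
    ∑ T ∈ (powersetCard t univ).filter (fun T => S ⊆ T), cnt W T =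
      cnt W S * (w - S.card).choose (t - S.card) := by
  unfold cnt
  simp only [Finset.card_filter _ (s := W)]
  rw [Finset.sum_comm, Finset.sum_mul]
  refine Finset.sum_congr rfl fun c hc => ?_
  rw [← Finset.sum_filter, ← Finset.card_eq_sum_ones]
  have hcw := hW c hc
  rw [← card_supp2] at hcw
  have e : ((powersetCard t univ).filter (fun T => S ⊆ T)).filter (fun T => T ⊆ supp2 c) =
      (powersetCard t (supp2 c)).filter (fun T => S ⊆ T) := by
    ext T
    simp only [Finset.mem_filter, Finset.mem_powersetCard, Finset.subset_univ, true_and]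
    tauto
  rw [e]
  split_ifs with h
  · rw [count_superset S _ t hS h, hcw, one_mul]
  · rw [zero_mul, Finset.card_eq_zero, Finset.filter_eq_empty_iff]
    intro T hT h'
    exact h (h'.trans (Finset.mem_powersetCard.mp hT).1)

lemma cnt_indep {n t w lam : ℕ} (W : Finset (Fin n → ZMod 2))
    (hW : ∀ c ∈ W, hammingNorm c = w) (htw : t ≤ w)
    (hl : ∀ T : Finset (Fin n), T.card = t → cnt W T = lam)
    (S S' : Finset (Fin n)) (hS : S.card ≤ t) (hSS : S'.card = S.card) :
    cnt W S = cnt W S' := by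
  have key : ∀ S : Finset (Fin n), S.card ≤ t →
      (n - S.card).choose (t - S.card) * lam = cnt W S * (w - S.card).choose (t - S.card) := by
    intro S hS
    rw [← cnt_up W hW S hS, Finset.sum_congr rfl (g := fun _ => lam)]
    · rw [Finset.sum_const, count_superset S _ t hS (Finset.subset_univ _)]
      simp
    · intro T hT
      simp only [Finset.mem_filter, Finset.mem_powersetCard] at hT
      exact hl T hT.1.2
  have k1 := key S hS
  have k2 := key S' (by omega)
  rw [hSS] at k2
  rw [k1] at k2
  exact Nat.eq_of_mul_eq_mul_right (Nat.choose_pos (by omega)) k2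

lemma sum_choose {n : ℕ} (W : Finset (Fin n → ZMod 2)) (T : Finset (Fin n)) (k : ℕ) :
    ∑ c ∈ W, (T ∩ supp2 c).card.choose k = ∑ S ∈ powersetCard k T, cnt W S := by
  unfold cnt
  simp only [Finset.card_filter _ (s := W)]
  rw [Finset.sum_comm]
  refine Finset.sum_congr rfl fun c hc => ?_
  rw [← Finset.sum_filter, ← Finset.card_eq_sum_ones, ← Finset.card_powersetCard]
  congr 1
  ext S
  simp only [Finset.mem_filter, Finset.mem_powersetCard, Finset.subset_inter_iff]
  tauto

lemma sum_fun_indep {n t : ℕ} {M : Type*} [AddCommGroup M] (W : Finset (Fin n → ZMod 2))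
    (hW : ∀ S S' : Finset (Fin n), S.card ≤ t → S'.card = S.card → cnt W S = cnt W S')
    (f : ℕ → M) (T T' : Finset (Fin n)) (hT : T.card = t) (hT' : T'.card = t) :
    ∑ c ∈ W, f (T ∩ supp2 c).card = ∑ c ∈ W, f (T' ∩ supp2 c).card := by
  have key : ∀ T : Finset (Fin n), T.card = t → ∑ c ∈ W, f (T ∩ supp2 c).card =
      ∑ k ∈ range (t + 1), (∑ S ∈ powersetCard k T, cnt W S) • ((fwdDiff 1)^[k] f 0) := by
    intro T hT
    rw [Finset.sum_congr rfl fun c _ => newton f _ t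
      (hT ▸ Finset.card_le_card (Finset.inter_subset_left))]
    rw [Finset.sum_comm]
    refine Finset.sum_congr rfl fun k _ => ?_
    rw [← sum_choose, Finset.sum_smul]
  rw [key T hT, key T' hT']
  refine Finset.sum_congr rfl fun k hk => ?_
  congr 1
  by_cases hne : ∃ S0 : Finset (Fin n), S0.card = k
  · obtain ⟨S0, hS0⟩ := hne
    simp only [Finset.mem_range] at hk
    have : ∀ T : Finset (Fin n), T.card = t → ∑ S ∈ powersetCard k T, cnt W S =
        t.choose k * cnt W S0 := by
      intro T hT
      rw [Finset.sum_congr rfl (g := fun _ => cnt W S0)]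
      · simp [hT]
      · intro S hS
        have := (Finset.mem_powersetCard.mp hS).2
        exact hW _ _ (by omega) (by omega)
    rw [this T hT, this T' hT']
  · rw [Finset.sum_eq_zero, Finset.sum_eq_zero] <;>
    · intro S hS
      exact (hne ⟨S, (Finset.mem_powersetCard.mp hS).2⟩).elim

/-- Let `C` be a binary linear code of length `n`, dimension `κ > 1`
and minimum nonzero Hamming weight `d`, and let `0 < t < d`. If for each weight `w > 0`
the supports of the weight-`w` codewords of `C` form a `t`-design, then for each nonzero
weight the supports of the codewords of that weight in `C^⊥` also form a `t`-design.
(For binary codes distinct codewords have distinct supports, so supports are counted via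
codewords.) -/
theorem dual_code_holds_t_designs
    (n κ d t : ℕ)
    (C : Submodule (ZMod 2) (Fin n → ZMod 2))
    (hκ : Module.finrank (ZMod 2) ↥C = κ) (hκ1 : 1 < κ)
    (hd : IsLeast {i | ∃ c ∈ C, c ≠ 0 ∧ hammingNorm c = i} d)
    (ht : 0 < t) (htd : t < d)
    (hdes : ∀ w, 0 < w →
      ∃ lam, ∀ T : Finset (Fin n), T.card = t →
        {c : Fin n → ZMod 2 |
          c ∈ C ∧ hammingNorm c = w ∧ ∀ i ∈ T, c i ≠ 0}.ncard = lam) :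
    ∀ w, 0 < w →
      ∃ lam, ∀ T : Finset (Fin n), T.card = t →
        {y : Fin n → ZMod 2 |
          y ∈ dualCode (C : Set (Fin n → ZMod 2)) ∧ hammingNorm y = w ∧
            ∀ i ∈ T, y i ≠ 0}.ncard = lam := by
  classical
  have hsub : ∀ (T : Finset (Fin n)) (y : Fin n → ZMod 2), T ⊆ supp2 y ↔ ∀ i ∈ T, y i ≠ 0 := by
    intro T y
    simp [Finset.subset_iff, supp2]
  let W : ℕ → Finset (Fin n → ZMod 2) := fun w =>
    univ.filter (fun c => c ∈ C ∧ hammingNorm c = w)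
  have hWw : ∀ w, ∀ c ∈ W w, hammingNorm c = w := by
    intro w c hc
    exact (Finset.mem_filter.mp hc).2.2
  have hWC : ∀ w, ∀ c ∈ W w, c ∈ C := by
    intro w c hc
    exact (Finset.mem_filter.mp hc).2.1
  have hcnt : ∀ w, ∀ T : Finset (Fin n), {c : Fin n → ZMod 2 |
          c ∈ C ∧ hammingNorm c = w ∧ ∀ i ∈ T, c i ≠ 0}.ncard = cnt (W w) T := by
    intro w T
    unfold cnt
    rw [← Set.ncard_coe_finset]
    congr 1
    ext c
    simp [W, hsub, and_assoc]
  have hind : ∀ w, ∀ S S' : Finset (Fin n), S.card ≤ t → S'.card = S.card →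
      cnt (W w) S = cnt (W w) S' := by
    intro w S S' hS hSS
    by_cases htw : t ≤ w
    · obtain ⟨lam, hlam⟩ := hdes w (by omega)
      exact cnt_indep (W w) (hWw w) htw (fun T hT => by rw [← hcnt, hlam T hT]) S S' hS hSS
    · have hz : ∀ c ∈ W w, supp2 c = ∅ := by
        intro c hc
        by_cases h0 : c = 0
        · subst h0; simp [supp2]
        · have := hd.2 ⟨c, hWC w c hc, h0, rfl⟩
          have := hWw w c hc
          omega
      unfold cnt
      congr 1
      refine Finset.filter_congr fun c hc => ?_
      rw [hz c hc, Finset.subset_empty, Finset.subset_empty, ← Finset.card_eq_zero,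
        ← Finset.card_eq_zero, hSS]
  have hsum : ∀ T T' : Finset (Fin n), T.card = t → T'.card = t →
      ∑ c ∈ univ.filter (fun c => c ∈ C), hpoly n t (hammingNorm c) (T ∩ supp2 c).card =
      ∑ c ∈ univ.filter (fun c => c ∈ C), hpoly n t (hammingNorm c) (T' ∩ supp2 c).card := by
    intro T T' hT hT'
    have key : ∀ T : Finset (Fin n), T.card = t →
      ∑ c ∈ univ.filter (fun c => c ∈ C), hpoly n t (hammingNorm c) (T ∩ supp2 c).card =
      ∑ w ∈ range (n + 1), ∑ c ∈ W w, hpoly n t w (T ∩ supp2 c).card := by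
      intro T hT
      rw [← Finset.sum_fiberwise_of_maps_to (g := fun c => hammingNorm c) (t := range (n + 1))]
      · refine Finset.sum_congr rfl fun w _ => ?_
        rw [Finset.filter_filter]
        refine Finset.sum_congr rfl fun c hc => ?_
        rw [hWw w c hc]
      · intro c _
        have := hammingNorm_le_card_fintype (x := c)
        simp only [Fintype.card_fin] at this
        simp only [Finset.mem_range]
        omega
    rw [key T hT, key T' hT']
    exact Finset.sum_congr rfl fun w _ => sum_fun_indep (W w) (hind w) (hpoly n t w) T T' hT hT'
  have hpol : ∀ T T' : Finset (Fin n), T.card = t → T'.card = t →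
      ∑ y ∈ univ.filter (fun y => y ∈ dualCode (C : Set (Fin n → ZMod 2)) ∧ T ⊆ supp2 y),
        (X : ℤ[X]) ^ (hammingNorm y) =
      ∑ y ∈ univ.filter (fun y => y ∈ dualCode (C : Set (Fin n → ZMod 2)) ∧ T' ⊆ supp2 y),
        (X : ℤ[X]) ^ (hammingNorm y) := by
    intro T T' hT hT'
    have h1 := macw C T
    have h2 := macw C T'
    rw [hT, hsum T T' hT hT'] at h1
    rw [hT', ← h1] at h2
    refine (mul_left_cancel₀ ?_ h2).symm
    rw [Ne, Polynomial.C_eq_zero, Nat.cast_eq_zero, Finset.card_eq_zero]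
    exact Finset.Nonempty.ne_empty ⟨0, by simp⟩
  intro w _
  have hcoef : ∀ T : Finset (Fin n), ({y : Fin n → ZMod 2 |
          y ∈ dualCode (C : Set (Fin n → ZMod 2)) ∧ hammingNorm y = w ∧
            ∀ i ∈ T, y i ≠ 0}.ncard : ℤ) =
      (∑ y ∈ univ.filter (fun y => y ∈ dualCode (C : Set (Fin n → ZMod 2)) ∧ T ⊆ supp2 y),
        (X : ℤ[X]) ^ (hammingNorm y)).coeff w := by
    intro T
    rw [Polynomial.finsetSum_coeff]
    simp only [Polynomial.coeff_X_pow]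
    rw [← Finset.sum_filter, Finset.sum_const, nsmul_eq_mul, mul_one, Nat.cast_inj,
      ← Set.ncard_coe_finset]
    congr 1
    ext y
    simp [hsub]
    tauto
  by_cases hne : ∃ T0 : Finset (Fin n), T0.card = t
  · obtain ⟨T0, hT0⟩ := hne
    refine ⟨{y : Fin n → ZMod 2 |
          y ∈ dualCode (C : Set (Fin n → ZMod 2)) ∧ hammingNorm y = w ∧
            ∀ i ∈ T0, y i ≠ 0}.ncard, fun T hT => ?_⟩
    have := hcoef T
    rw [hpol T T0 hT hT0, ← hcoef T0] at this
    exact_mod_cast this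
  · exact ⟨0, fun T hT => (hne ⟨T, hT⟩).elim⟩
end
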